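/- Fix 0 < r < 1 and set t = √(1 − r²). Let ν be a Borel probability measure on 𝕋 = ℝ/2πℤ whose absolutely continuous part with respect to Haar measure is a nonzero measure and whose topological support has nonempty interior. Let (θ_k)_{k∈ℕ₀} be i.i.d. random phases with distribution ν (on the product space (𝕋^{ℕ₀}, ν^{⊗ℕ₀})), and set η_k(ω) = θ_0(ω) + θ_1(ω) + ⋯ + θ_k(ω), so that η_k is distributed as the (k+1)-fold convolution ν ∗ ⋯ ∗ ν. Then for almost every ω, the CMV matrix C_ω with Verblunski coefficients α_k(ω) = r e^{iη_k(ω)} has pure point spectrum: the closed linear span of the eigenvectors of C_ω equals all of ℓ²(ℕ₀;ℂ); equivalently, since e₀ is a cyclic vector for C_ω, the orthogonality measure of the corresponding random orthogonal polynomials on the unit circle is almost surely a pure point measure. -/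

import Mathlib

open MeasureTheory Complex

noncomputable section

instance : Fact (0 < 2 * Real.pi) := ⟨by positivity⟩

/-- The torus `𝕋 = ℝ/2πℤ`. -/
abbrev Torus : Type := AddCircle (2 * Real.pi)

/-- `ec a = e^{ia}` for `a ∈ 𝕋`. -/
def ec (a : Torus) : ℂ := (AddCircle.toCircle a : ℂ)

/-- The topological support of a measure. -/
def measSupport (ν : Measure Torus) : Set Torus := {x | ∀ s ∈ nhds x, 0 < ν s}

/-- `ℓ²(ℕ₀;ℂ)`. -/
abbrev Hn : Type := lp (fun _ : ℕ => ℂ) 2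

/-- Canonical orthonormal basis of `ℓ²(ℕ₀;ℂ)`. -/
def en (k : ℕ) : Hn := lp.single 2 k (1 : ℂ)

/-- Matrix entries of the CMV matrix with Verblunski coefficients `α_k = r e^{iη_k}`,
with torus-valued phases `η`. -/
def CentA (r t : ℝ) (η : ℕ → Torus) (k j : ℕ) : ℂ :=
  if k = 0 then
    (if j = 0 then (r:ℂ) * ec (-(η 0))
     else if j = 1 then ((r*t : ℝ) : ℂ) * ec (-(η 1))
     else if j = 2 then ((t^2 : ℝ) : ℂ) else 0)
  else if k = 1 then
    (if j = 0 then ((t : ℝ) : ℂ)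
     else if j = 1 then -((r^2 : ℝ) : ℂ) * ec (η 0 - η 1)
     else if j = 2 then -((r*t : ℝ) : ℂ) * ec (η 0) else 0)
  else if k % 2 = 0 then
    (if j + 1 = k then ((r*t : ℝ) : ℂ) * ec (-(η k))
     else if j = k then -((r^2 : ℝ) : ℂ) * ec (η (k-1) - η k)
     else if j = k + 1 then ((r*t : ℝ) : ℂ) * ec (-(η (k+1)))
     else if j = k + 2 then ((t^2 : ℝ) : ℂ) else 0)
  else
    (if j + 2 = k then ((t^2 : ℝ) : ℂ)
     else if j + 1 = k then -((r*t : ℝ) : ℂ) * ec (η (k-2))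
     else if j = k then -((r^2 : ℝ) : ℂ) * ec (η (k-1) - η k)
     else if j = k + 1 then -((r*t : ℝ) : ℂ) * ec (η (k-1)) else 0)

/-!
The vector `χ(ζ) = (χ_k(ζ))_k` of Laurent orthonormal functions solves `C χ = e^{iζ} χ`, and for
the spectral measure `μ` the map `ψ ↦ ∑ ψ_k conj(χ_k)` is an isometry into `L²(μ)`. Hence
`∑ ∫ |χ_k| dμ < ∞` is enough for the `ℓ²` eigenvectors to be complete.

The measure `μ` is the weak limit of the Bernstein–Szegő measures `|φ_N^*|⁻² dζ`, for which
`∫ |χ_k| dμ_N` is a product of one-step weights in the Prüfer phases. With `η_k = θ_0 + ⋯ + θ_k`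
the Prüfer phases form a random walk, so the expectation of this product is a word in two transfer
operators: a norm contraction by some `σ < 1` per step between `j` and `k`, and a Markov-type
operator between `k` and `N`. The contraction comes from `|∫ e^{inθ} dν| ≤ q < 1` for `n ≠ 0`.
To pass from `L²` bounds to expectations one restricts to paths with `θ_j ∈ G` and `θ_l ∈ G`, where
`ν` has a bounded density on `G`. By Borel–Cantelli such `l` exist in every window `[k, k + k/M)`
with `k` large, and this window is short enough not to spoil the exponential decay. Fatou's lemma
then bounds the sums for almost every `ω`.
-/

section

open scoped ComplexConjugate ENNReal NNReal Polynomial Topology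
open AddCircle Filter

lemma ec_zero : ec 0 = 1 := by simp [ec]

lemma ec_add (a b : Torus) : ec (a + b) = ec a * ec b := by
  simp [ec, AddCircle.toCircle_add]

lemma norm_ec (a : Torus) : ‖ec a‖ = 1 := Circle.norm_coe _

lemma ec_ne_zero (a : Torus) : ec a ≠ 0 := Circle.coe_ne_zero _

lemma ec_mul_conj (a : Torus) : ec a * conj (ec a) = 1 := by
  simp [Complex.mul_conj', norm_ec]

lemma conj_ec (a : Torus) : conj (ec a) = (ec a)⁻¹ :=
  eq_inv_of_mul_eq_one_right (ec_mul_conj a)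

lemma ec_neg (a : Torus) : ec (-a) = conj (ec a) := by
  rw [conj_ec]
  exact eq_inv_of_mul_eq_one_right (by rw [← ec_add, add_neg_cancel, ec_zero])

lemma ec_sub (a b : Torus) : ec (a - b) = ec a * conj (ec b) := by
  rw [sub_eq_add_neg, ec_add, ec_neg]

lemma conj_ec_zpow (a : Torus) (m : ℤ) : conj (ec a ^ m) = ec a ^ (-m) := by
  rw [map_zpow₀, conj_ec, inv_zpow, zpow_neg]

@[fun_prop]
lemma continuous_ec : Continuous ec :=
  continuous_subtype_val.comp AddCircle.continuous_toCircle

lemma continuous_ec_zpow (m : ℤ) : Continuous fun ζ ↦ ec ζ ^ m :=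
  continuous_ec.zpow₀ m fun a ↦ Or.inl (ec_ne_zero a)

lemma fourier_eq_ec_zpow (n : ℤ) (x : Torus) : (fourier n x : ℂ) = ec x ^ n := by
  simp [fourier_apply, ec, AddCircle.toCircle_zsmul]

lemma integral_ec_eq_circleAverage {E : Type*} [NormedAddCommGroup E] [NormedSpace ℝ E]
    (F : ℂ → E) : ∫ ζ, F (ec ζ) ∂haarAddCircle = Real.circleAverage F 0 1 := by
  rw [AddCircle.integral_haarAddCircle, Real.circleAverage_def,
    ← AddCircle.intervalIntegral_preimage (2 * Real.pi) 0, zero_add]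
  congr 1
  exact intervalIntegral.integral_congr fun x _ ↦ by
    simp [ec, AddCircle.toCircle_apply_mk, circleMap]

lemma integral_ec_of_differentiableAt {F : ℂ → ℂ} (hF : ∀ z, ‖z‖ ≤ 1 → DifferentiableAt ℂ F z) :
    ∫ ζ, F (ec ζ) ∂haarAddCircle = F 0 := by
  rw [integral_ec_eq_circleAverage]
  refine DiffContOnCl.circleAverage (DifferentiableOn.diffContOnCl fun z hz ↦ ?_)
  refine (hF z ?_).differentiableWithinAt
  simpa [closure_ball] using hz

lemma integrable_of_continuous {X E : Type*} [TopologicalSpace X] [CompactSpace X]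
    [MeasurableSpace X] [OpensMeasurableSpace X] [NormedAddCommGroup E]
    {μ : Measure X} [IsFiniteMeasureOnCompacts μ] {f : X → E} (hf : Continuous f) :
    Integrable f μ :=
  hf.integrable_of_hasCompactSupport (HasCompactSupport.of_compactSpace f)

section OrthogonalPolynomials

variable (α : ℕ → ℂ)

/-- The complementary coefficient `ρ_n = √(1 - |α_n|²)` of the Verblunsky coefficient `α_n`. -/
def rho (n : ℕ) : ℝ := √(1 - ‖α n‖ ^ 2)

/-- The pair `(φ_n, φ_n^*)` of the normalised orthogonal polynomial on the unit circle with
Verblunsky coefficients `α` and its reversed polynomial, defined by the Szegő recursion. -/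
def szegoPair : ℕ → ℂ[X] × ℂ[X]
  | 0 => (1, 1)
  | n + 1 =>
    (.C (rho α n : ℂ)⁻¹ * (.X * (szegoPair n).1 - .C (conj (α n)) * (szegoPair n).2),
      .C (rho α n : ℂ)⁻¹ * ((szegoPair n).2 - .C (α n) * (.X * (szegoPair n).1)))

/-- The normalised orthogonal polynomial `φ_n`. -/
def orthoPoly (n : ℕ) : ℂ[X] := (szegoPair α n).1

/-- The reversed polynomial `φ_n^*`. -/
def revPoly (n : ℕ) : ℂ[X] := (szegoPair α n).2

/-- The orthogonal polynomial `φ_n` as a function of the angle. -/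
def orthoFun (n : ℕ) (ζ : Torus) : ℂ := (orthoPoly α n).eval (ec ζ)

/-- The reversed polynomial `φ_n^*` as a function of the angle. -/
def revFun (n : ℕ) (ζ : Torus) : ℂ := (revPoly α n).eval (ec ζ)

lemma natDegree_szegoPair_le (n : ℕ) :
    (orthoPoly α n).natDegree ≤ n ∧ (revPoly α n).natDegree ≤ n := by
  induction n with
  | zero => simp [orthoPoly, revPoly, szegoPair]
  | succ n ih =>
    obtain ⟨hφ, hφs⟩ := ih
    have hX : (Polynomial.X * orthoPoly α n).natDegree ≤ n + 1 :=
      Polynomial.natDegree_mul_le.trans <|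
        (add_le_add Polynomial.natDegree_X_le hφ).trans (add_comm 1 n).le
    constructor
    · refine (Polynomial.natDegree_C_mul_le _ _).trans <|
        (Polynomial.natDegree_sub_le _ _).trans (max_le hX ?_)
      exact (Polynomial.natDegree_C_mul_le _ _).trans (hφs.trans n.le_succ)
    · refine (Polynomial.natDegree_C_mul_le _ _).trans <|
        (Polynomial.natDegree_sub_le _ _).trans (max_le (hφs.trans n.le_succ) ?_)
      exact (Polynomial.natDegree_C_mul_le _ _).trans hX

lemma eval_orthoPoly_succ (n : ℕ) (z : ℂ) : (orthoPoly α (n + 1)).eval z =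
    (rho α n : ℂ)⁻¹ * (z * (orthoPoly α n).eval z - conj (α n) * (revPoly α n).eval z) := by
  simp [orthoPoly, revPoly, szegoPair]

lemma eval_revPoly_succ (n : ℕ) (z : ℂ) : (revPoly α (n + 1)).eval z =
    (rho α n : ℂ)⁻¹ * ((revPoly α n).eval z - α n * (z * (orthoPoly α n).eval z)) := by
  simp [orthoPoly, revPoly, szegoPair]

lemma orthoFun_zero (ζ : Torus) : orthoFun α 0 ζ = 1 := by
  simp [orthoFun, orthoPoly, szegoPair]

lemma revFun_zero (ζ : Torus) : revFun α 0 ζ = 1 := by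
  simp [revFun, revPoly, szegoPair]

lemma orthoFun_succ (n : ℕ) (ζ : Torus) : orthoFun α (n + 1) ζ =
    (rho α n : ℂ)⁻¹ * (ec ζ * orthoFun α n ζ - conj (α n) * revFun α n ζ) :=
  eval_orthoPoly_succ α n _

lemma revFun_succ (n : ℕ) (ζ : Torus) : revFun α (n + 1) ζ =
    (rho α n : ℂ)⁻¹ * (revFun α n ζ - α n * (ec ζ * orthoFun α n ζ)) :=
  eval_revPoly_succ α n _

@[fun_prop]
lemma continuous_orthoFun (n : ℕ) : Continuous (orthoFun α n) :=
  (orthoPoly α n).continuous.comp continuous_ec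

@[fun_prop]
lemma continuous_revFun (n : ℕ) : Continuous (revFun α n) :=
  (revPoly α n).continuous.comp continuous_ec

lemma revFun_eq (n : ℕ) (ζ : Torus) : revFun α n ζ = ec ζ ^ n * conj (orthoFun α n ζ) := by
  induction n with
  | zero => simp [orthoFun_zero, revFun_zero]
  | succ n ih =>
    have hn : conj (ec ζ) ^ n * ec ζ ^ n = 1 := by
      rw [← mul_pow, mul_comm, ec_mul_conj, one_pow]
    rw [revFun_succ, orthoFun_succ, ih]
    simp only [map_sub, map_mul, map_inv₀, map_pow, Complex.conj_ofReal, Complex.conj_conj,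
      pow_succ]
    linear_combination (rho α n : ℂ)⁻¹ * (α n * ec ζ * orthoFun α n ζ) * hn
      - (rho α n : ℂ)⁻¹ * ec ζ ^ n * conj (orthoFun α n ζ) * ec_mul_conj ζ

lemma norm_revFun (n : ℕ) (ζ : Torus) : ‖revFun α n ζ‖ = ‖orthoFun α n ζ‖ := by
  simp [revFun_eq, norm_ec]

lemma norm_sub_mul_sq_sub_norm_sub_conj_mul_sq (a q w : ℂ) :
    ‖q - a * w‖ ^ 2 - ‖w - conj a * q‖ ^ 2 = (1 - ‖a‖ ^ 2) * (‖q‖ ^ 2 - ‖w‖ ^ 2) := by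
  apply Complex.ofReal_injective
  push_cast
  simp only [← Complex.mul_conj', map_sub, map_mul, Complex.conj_conj]
  ring

variable {α} (hα : ∀ n, ‖α n‖ < 1)
include hα

lemma rho_pos (n : ℕ) : 0 < rho α n :=
  Real.sqrt_pos.2 (by nlinarith [hα n, norm_nonneg (α n)])

lemma rho_sq (n : ℕ) : rho α n ^ 2 = 1 - ‖α n‖ ^ 2 :=
  Real.sq_sqrt (by nlinarith [hα n, norm_nonneg (α n)])

lemma ofReal_rho_sq (n : ℕ) : (rho α n : ℂ) ^ 2 = 1 - α n * conj (α n) := by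
  rw [Complex.mul_conj']
  exact_mod_cast rho_sq hα n

lemma eval_revPoly_ne_zero_and_norm_eval_orthoPoly_le (n : ℕ) {z : ℂ} (hz : ‖z‖ ≤ 1) :
    (revPoly α n).eval z ≠ 0 ∧ ‖(orthoPoly α n).eval z‖ ≤ ‖(revPoly α n).eval z‖ := by
  induction n with
  | zero => simp [orthoPoly, revPoly, szegoPair]
  | succ n ih =>
    rw [eval_orthoPoly_succ, eval_revPoly_succ]
    set q := (revPoly α n).eval z
    set w := z * (orthoPoly α n).eval z with hw
    have hq : 0 < ‖q‖ := norm_pos_iff.2 ih.1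
    have hwq : ‖w‖ ≤ ‖q‖ := by
      rw [hw, norm_mul]
      exact (mul_le_of_le_one_left (norm_nonneg _) hz).trans ih.2
    have hρ := rho_pos hα n
    refine ⟨mul_ne_zero (by simpa using hρ.ne') fun h ↦ ?_, ?_⟩
    · have hqw : ‖q‖ = ‖α n‖ * ‖w‖ := by rw [sub_eq_zero.1 h, norm_mul]
      nlinarith [hα n, norm_nonneg (α n)]
    · rw [norm_mul, norm_mul]
      refine mul_le_mul_of_nonneg_left (le_of_sq_le_sq ?_ (norm_nonneg _)) (norm_nonneg _)
      rw [← sub_nonneg, norm_sub_mul_sq_sub_norm_sub_conj_mul_sq, ← rho_sq hα n]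
      exact mul_nonneg (sq_nonneg _)
        (sub_nonneg.2 (pow_le_pow_left₀ (norm_nonneg _) hwq 2))

lemma revFun_ne_zero (n : ℕ) (ζ : Torus) : revFun α n ζ ≠ 0 :=
  (eval_revPoly_ne_zero_and_norm_eval_orthoPoly_le hα n (norm_ec ζ).le).1

lemma orthoFun_ne_zero (n : ℕ) (ζ : Torus) : orthoFun α n ζ ≠ 0 := by
  rw [← norm_ne_zero_iff, ← norm_revFun, norm_ne_zero_iff]
  exact revFun_ne_zero hα n ζ

lemma ec_mul_orthoFun (n : ℕ) (ζ : Torus) : ec ζ * orthoFun α n ζ =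
    rho α n * orthoFun α (n + 1) ζ + conj (α n) * revFun α n ζ := by
  have hρ : (rho α n : ℂ) ≠ 0 := by exact_mod_cast (rho_pos hα n).ne'
  rw [orthoFun_succ]
  field_simp
  ring

lemma rho_mul_revFun (n : ℕ) (ζ : Torus) : rho α n * revFun α n ζ =
    revFun α (n + 1) ζ + α n * orthoFun α (n + 1) ζ := by
  have hρ : (rho α n : ℂ) ≠ 0 := by exact_mod_cast (rho_pos hα n).ne'
  rw [orthoFun_succ, revFun_succ]
  field_simp
  linear_combination revFun α n ζ * ofReal_rho_sq hα n

lemma ec_mul_orthoFun_eq_succ (n : ℕ) (ζ : Torus) : ec ζ * orthoFun α n ζ =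
    (rho α n : ℂ)⁻¹ * (orthoFun α (n + 1) ζ + conj (α n) * revFun α (n + 1) ζ) := by
  have hρ : (rho α n : ℂ) ≠ 0 := by exact_mod_cast (rho_pos hα n).ne'
  field_simp
  linear_combination rho α n * ec_mul_orthoFun hα n ζ + conj (α n) * rho_mul_revFun hα n ζ
    + orthoFun α (n + 1) ζ * ofReal_rho_sq hα n

lemma norm_orthoFun_sq (n : ℕ) (ζ : Torus) : ‖orthoFun α n ζ‖ ^ 2 =
    ‖orthoFun α (n + 1) ζ‖ ^ 2 +
      2 / rho α n * (α n * (conj (revFun α n ζ) * orthoFun α (n + 1) ζ)).re := by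
  have hρ : rho α n ≠ 0 := (rho_pos hα n).ne'
  have hsq := congrArg Complex.normSq (ec_mul_orthoFun hα n ζ)
  have hα2 := rho_sq hα n
  have hcross : rho α n * orthoFun α (n + 1) ζ * conj (conj (α n) * revFun α n ζ) =
      (rho α n : ℂ) * (α n * (conj (revFun α n ζ) * orthoFun α (n + 1) ζ)) := by
    simp only [map_mul, Complex.conj_conj]
    ring
  rw [Complex.normSq_add, hcross, Complex.re_ofReal_mul] at hsq
  simp only [map_mul, Complex.normSq_eq_norm_sq, norm_ec, Complex.norm_real, RCLike.norm_conj,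
    norm_revFun, Real.norm_eq_abs, sq_abs] at hsq
  generalize (α n * (conj (revFun α n ζ) * orthoFun α (n + 1) ζ)).re = x at hsq ⊢
  field_simp
  refine mul_left_cancel₀ hρ ?_
  linear_combination hsq + ‖orthoFun α n ζ‖ ^ 2 * hα2

end OrthogonalPolynomials

section Orthogonality

lemma integral_conj_eval_mul_eq_zero {μ : Measure Torus} [IsFiniteMeasure μ] {f : Torus → ℂ}
    (hf : Continuous f) {n : ℕ} (h : ∀ i ≤ n, ∫ ζ, ec ζ ^ (-(i : ℤ)) * f ζ ∂μ = 0)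
    {p : ℂ[X]} (hp : p.natDegree ≤ n) : ∫ ζ, conj (p.eval (ec ζ)) * f ζ ∂μ = 0 := by
  have hexpand (ζ : Torus) : conj (p.eval (ec ζ)) * f ζ =
      ∑ i ∈ Finset.range (n + 1), conj (p.coeff i) * (ec ζ ^ (-(i : ℤ)) * f ζ) := by
    rw [Polynomial.eval_eq_sum_range' (Nat.lt_succ_of_le hp), map_sum, Finset.sum_mul]
    refine Finset.sum_congr rfl fun i _ ↦ ?_
    rw [map_mul, mul_assoc, ← zpow_natCast, conj_ec_zpow]
  simp_rw [hexpand]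
  rw [integral_finsetSum _ fun i _ ↦ Integrable.const_mul
    (integrable_of_continuous (by have := continuous_ec_zpow (-(i : ℤ)); fun_prop)) _]
  refine Finset.sum_eq_zero fun i hi ↦ ?_
  rw [integral_const_mul, h i (Finset.mem_range_succ_iff.1 hi), mul_zero]

/-- `φ_n` has unit norm in `L²(μ)` and is orthogonal to all polynomials of degree `< n`. -/
structure IsOrthonormalPoly (α : ℕ → ℂ) (μ : Measure Torus) (n : ℕ) : Prop where
  integral_ec_zpow_mul : ∀ m < n, ∫ ζ, ec ζ ^ (-(m : ℤ)) * orthoFun α n ζ ∂μ = 0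
  integral_norm_sq : ∫ ζ, ‖orthoFun α n ζ‖ ^ 2 ∂μ = 1

namespace IsOrthonormalPoly

variable {α : ℕ → ℂ} {μ : Measure Torus}

lemma integral_ec_zpow_mul_revFun {n : ℕ} (h : IsOrthonormalPoly α μ n) {m : ℕ} (hm : 0 < m)
    (hmn : m ≤ n) : ∫ ζ, ec ζ ^ (-(m : ℤ)) * revFun α n ζ ∂μ = 0 := by
  have hconj := congrArg conj (h.integral_ec_zpow_mul (n - m) (by lia))
  rw [← integral_conj, map_zero] at hconj
  refine Eq.trans (integral_congr_ae (.of_forall fun ζ ↦ ?_)) hconj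
  simp only [revFun_eq, map_mul, conj_ec_zpow, neg_neg, Nat.cast_sub hmn]
  rw [← mul_assoc, ← zpow_natCast, ← zpow_add₀ (ec_ne_zero ζ)]
  congr 2
  ring

variable [IsFiniteMeasure μ] (hα : ∀ n, ‖α n‖ < 1)
include hα

lemma of_succ {n : ℕ} (h : IsOrthonormalPoly α μ (n + 1)) : IsOrthonormalPoly α μ n where
  integral_ec_zpow_mul m hm := by
    have hrec (ζ : Torus) : ec ζ ^ (-(m : ℤ)) * orthoFun α n ζ =
        (rho α n : ℂ)⁻¹ * (ec ζ ^ (-((m + 1 : ℕ) : ℤ)) * orthoFun α (n + 1) ζ) +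
          (rho α n : ℂ)⁻¹ * conj (α n) *
            (ec ζ ^ (-((m + 1 : ℕ) : ℤ)) * revFun α (n + 1) ζ) := by
      have hshift : ec ζ ^ (-(m : ℤ)) = ec ζ ^ (-((m + 1 : ℕ) : ℤ)) * ec ζ := by
        rw [← zpow_add_one₀ (ec_ne_zero ζ)]
        congr 1
        push_cast
        ring
      rw [hshift]
      linear_combination ec ζ ^ (-((m + 1 : ℕ) : ℤ)) * ec_mul_orthoFun_eq_succ hα n ζ
    have hcont := continuous_ec_zpow (-((m + 1 : ℕ) : ℤ))
    simp_rw [hrec]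
    rw [integral_add, integral_const_mul, integral_const_mul,
      h.integral_ec_zpow_mul _ (by lia), h.integral_ec_zpow_mul_revFun (by lia) (by lia),
      mul_zero, mul_zero, add_zero]
    all_goals exact integrable_of_continuous (by fun_prop)
  integral_norm_sq := by
    have horth : ∫ ζ, conj (revFun α n ζ) * orthoFun α (n + 1) ζ ∂μ = 0 :=
      integral_conj_eval_mul_eq_zero (continuous_orthoFun α (n + 1))
        (fun i hi ↦ h.integral_ec_zpow_mul i (by lia)) (natDegree_szegoPair_le α n).2
    simp_rw [norm_orthoFun_sq hα n]
    rw [integral_add, integral_const_mul, h.integral_norm_sq]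
    · have hre := integral_re (𝕜 := ℂ) (μ := μ)
        (f := fun ζ ↦ α n * (conj (revFun α n ζ) * orthoFun α (n + 1) ζ))
        (integrable_of_continuous (by fun_prop))
      rw [integral_const_mul, horth, mul_zero, map_zero] at hre
      rw [show ∫ ζ, (α n * (conj (revFun α n ζ) * orthoFun α (n + 1) ζ)).re ∂μ = 0 from hre,
        mul_zero, add_zero]
    all_goals exact integrable_of_continuous (by fun_prop)

lemma of_le {n N : ℕ} (h : IsOrthonormalPoly α μ N) (hn : n ≤ N) : IsOrthonormalPoly α μ n := by
  induction hn using Nat.decreasingInduction with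
  | self => exact h
  | of_succ n _ ih => exact ih.of_succ hα

end IsOrthonormalPoly

/-- The `n`-th element of the orthonormal Laurent polynomial basis in which multiplication by
`e^{iζ}` is the CMV matrix: `z^{-k} φ_{2k}` for `n = 2k` and `z^{-k} φ_{2k-1}^*` for `n = 2k-1`. -/
def cmvFun (α : ℕ → ℂ) (n : ℕ) (ζ : Torus) : ℂ :=
  ec ζ ^ (-(((n + 1) / 2 : ℕ) : ℤ)) * if Even n then orthoFun α n ζ else revFun α n ζ

@[fun_prop]
lemma continuous_cmvFun (α : ℕ → ℂ) (n : ℕ) : Continuous (cmvFun α n) := by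
  have := continuous_ec_zpow (-(((n + 1) / 2 : ℕ) : ℤ))
  unfold cmvFun
  split_ifs <;> fun_prop

lemma norm_cmvFun (α : ℕ → ℂ) (n : ℕ) (ζ : Torus) : ‖cmvFun α n ζ‖ = ‖orthoFun α n ζ‖ := by
  unfold cmvFun
  split_ifs <;> simp [norm_ec, norm_revFun]

lemma exists_cmvFun_eq (α : ℕ → ℂ) (n : ℕ) : ∃ p : ℂ[X], p.natDegree ≤ n ∧
    ∀ ζ, cmvFun α n ζ = ec ζ ^ (-(((n + 1) / 2 : ℕ) : ℤ)) * p.eval (ec ζ) := by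
  unfold cmvFun
  split_ifs
  · exact ⟨_, (natDegree_szegoPair_le α n).1, fun ζ ↦ rfl⟩
  · exact ⟨_, (natDegree_szegoPair_le α n).2, fun ζ ↦ rfl⟩

variable {α : ℕ → ℂ} {μ : Measure Torus} [IsFiniteMeasure μ]

lemma integral_conj_cmvFun_mul_of_lt {j k : ℕ} (hk : IsOrthonormalPoly α μ k) (hjk : j < k) :
    ∫ ζ, conj (cmvFun α j ζ) * cmvFun α k ζ ∂μ = 0 := by
  obtain ⟨p, hp, hj⟩ := exists_cmvFun_eq α j
  have hcont : Continuous fun ζ ↦ ec ζ ^ (((j + 1) / 2 : ℕ) : ℤ) * cmvFun α k ζ :=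
    (continuous_ec_zpow _).mul (continuous_cmvFun α k)
  refine Eq.trans (integral_congr_ae (.of_forall fun ζ ↦ ?_))
    (integral_conj_eval_mul_eq_zero hcont (fun i hi ↦ ?_) hp)
  · simp only [hj, map_mul, conj_ec_zpow, neg_neg]
    ring
  have hshift (ζ : Torus) : ec ζ ^ (-(i : ℤ)) * (ec ζ ^ (((j + 1) / 2 : ℕ) : ℤ) * cmvFun α k ζ) =
      ec ζ ^ (-((i + (k + 1) / 2 - (j + 1) / 2 : ℕ) : ℤ)) *
        if Even k then orthoFun α k ζ else revFun α k ζ := by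
    rw [cmvFun, ← mul_assoc, ← mul_assoc, ← zpow_add₀ (ec_ne_zero ζ), ← zpow_add₀ (ec_ne_zero ζ)]
    congr 2
    lia
  simp_rw [hshift]
  split_ifs with hpar
  · rw [Nat.even_iff] at hpar
    exact hk.integral_ec_zpow_mul _ (by lia)
  · rw [Nat.not_even_iff] at hpar
    exact hk.integral_ec_zpow_mul_revFun (by lia) (by lia)

lemma integral_conj_cmvFun_mul {j k : ℕ} (hj : IsOrthonormalPoly α μ j)
    (hk : IsOrthonormalPoly α μ k) :
    ∫ ζ, conj (cmvFun α j ζ) * cmvFun α k ζ ∂μ = if j = k then 1 else 0 := by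
  rcases lt_trichotomy j k with h | rfl | h
  · rw [integral_conj_cmvFun_mul_of_lt hk h, if_neg h.ne]
  · simp only [Complex.conj_mul', norm_cmvFun, if_true]
    exact_mod_cast (integral_ofReal (𝕜 := ℂ)).trans (congrArg _ hj.integral_norm_sq)
  · have hconj := congrArg conj (integral_conj_cmvFun_mul_of_lt hj h)
    rw [← integral_conj, map_zero] at hconj
    simpa only [map_mul, Complex.conj_conj, mul_comm, if_neg h.ne'] using hconj

end Orthogonality

section BernsteinSzego

/-- The `N`-th Bernstein–Szegő measure `|φ_N|⁻² dζ/2π`, whose orthogonal polynomials up to degree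
`N` are `φ_0, …, φ_N`. -/
def bernsteinSzego (α : ℕ → ℂ) (N : ℕ) : Measure Torus :=
  haarAddCircle.withDensity fun ζ ↦ ENNReal.ofReal ((‖orthoFun α N ζ‖ ^ 2)⁻¹)

variable {α : ℕ → ℂ} (hα : ∀ n, ‖α n‖ < 1) (N : ℕ)
include hα

lemma continuous_inv_norm_orthoFun_sq : Continuous fun ζ ↦ (‖orthoFun α N ζ‖ ^ 2)⁻¹ :=
  Continuous.inv₀ (by fun_prop) fun ζ ↦ by simp [orthoFun_ne_zero hα]

lemma integral_bernsteinSzego {E : Type*} [NormedAddCommGroup E] [NormedSpace ℝ E]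
    (f : Torus → E) : ∫ ζ, f ζ ∂bernsteinSzego α N =
      ∫ ζ, (‖orthoFun α N ζ‖ ^ 2)⁻¹ • f ζ ∂haarAddCircle := by
  rw [bernsteinSzego, integral_withDensity_eq_integral_toReal_smul
    (continuous_inv_norm_orthoFun_sq hα N).measurable.ennreal_ofReal (by simp)]
  simp

lemma isOrthonormalPoly_bernsteinSzego_self : IsOrthonormalPoly α (bernsteinSzego α N) N where
  integral_ec_zpow_mul m hm := by
    have hmv := integral_ec_of_differentiableAt
      (F := fun z ↦ z ^ (N - m) * ((revPoly α N).eval z)⁻¹)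
      fun z hz ↦ (differentiableAt_id.pow _).mul <| (revPoly α N).differentiableAt.inv
        (eval_revPoly_ne_zero_and_norm_eval_orthoPoly_le hα N hz).1
    rw [integral_bernsteinSzego hα]
    refine Eq.trans (integral_congr_ae (.of_forall fun ζ ↦ ?_))
      (hmv.trans (by simp [Nat.sub_ne_zero_of_lt hm]))
    have hφ := orthoFun_ne_zero hα N ζ
    have hφ' : conj (orthoFun α N ζ) ≠ 0 := by simpa using hφ
    have hζ := ec_ne_zero ζ
    have hrev : (revPoly α N).eval (ec ζ) = _ := revFun_eq α N ζ
    simp only [hrev, Complex.real_smul, Complex.ofReal_inv, Complex.ofReal_pow, zpow_neg,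
      zpow_natCast, pow_sub₀ _ hζ hm.le, ← Complex.mul_conj']
    field_simp
  integral_norm_sq := by
    rw [integral_bernsteinSzego hα]
    have hone (ζ : Torus) : (‖orthoFun α N ζ‖ ^ 2)⁻¹ • ‖orthoFun α N ζ‖ ^ 2 = 1 :=
      inv_mul_cancel₀ (by simp [orthoFun_ne_zero hα])
    simp_rw [hone]
    simp

lemma isFiniteMeasure_bernsteinSzego : IsFiniteMeasure (bernsteinSzego α N) :=
  isFiniteMeasure_withDensity_ofReal
    (integrable_of_continuous (continuous_inv_norm_orthoFun_sq hα N)).hasFiniteIntegral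

lemma isProbabilityMeasure_bernsteinSzego : IsProbabilityMeasure (bernsteinSzego α N) := by
  have := isFiniteMeasure_bernsteinSzego hα N
  have h := ((isOrthonormalPoly_bernsteinSzego_self hα N).of_le hα N.zero_le).integral_norm_sq
  constructor
  simpa [orthoFun_zero, measureReal_def, ENNReal.toReal_eq_one_iff] using h

lemma integral_conj_cmvFun_mul_bernsteinSzego {j k : ℕ} (hj : j ≤ N) (hk : k ≤ N) :
    ∫ ζ, conj (cmvFun α j ζ) * cmvFun α k ζ ∂bernsteinSzego α N = if j = k then 1 else 0 :=
  have := isFiniteMeasure_bernsteinSzego hα N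
  have h := isOrthonormalPoly_bernsteinSzego_self hα N
  integral_conj_cmvFun_mul (h.of_le hα hj) (h.of_le hα hk)

end BernsteinSzego

section CMVMatrix

variable {α : ℕ → ℂ} (hα : ∀ n, ‖α n‖ < 1)

lemma cmvFun_zero (ζ : Torus) : cmvFun α 0 ζ = 1 := by
  simp [cmvFun, orthoFun_zero]

lemma cmvFun_odd (b : ℕ) (ζ : Torus) :
    cmvFun α (2 * b + 1) ζ = ec ζ ^ (-((b + 1 : ℕ) : ℤ)) * revFun α (2 * b + 1) ζ := by
  rw [cmvFun, if_neg (by simp [parity_simps]), show (2 * b + 1 + 1) / 2 = b + 1 by lia]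

lemma cmvFun_even (b : ℕ) (ζ : Torus) :
    cmvFun α (2 * b + 2) ζ = ec ζ ^ (-((b + 1 : ℕ) : ℤ)) * orthoFun α (2 * b + 2) ζ := by
  rw [cmvFun, if_pos (by simp [parity_simps]), show (2 * b + 2 + 1) / 2 = b + 1 by lia]

lemma ec_zpow_neg_succ (b : ℕ) (ζ : Torus) :
    ec ζ ^ (-((b + 1 : ℕ) : ℤ)) = ec ζ ^ (-((b + 1 + 1 : ℕ) : ℤ)) * ec ζ := by
  rw [← zpow_add_one₀ (ec_ne_zero ζ)]
  congr 1

include hα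

lemma ec_mul_cmvFun_zero (ζ : Torus) : ec ζ * cmvFun α 0 ζ =
    conj (α 0) * cmvFun α 0 ζ + rho α 0 * conj (α 1) * cmvFun α 1 ζ +
      rho α 0 * rho α 1 * cmvFun α 2 ζ := by
  have h₀ := ec_mul_orthoFun hα 0 ζ
  have h₁ := ec_mul_orthoFun hα 1 ζ
  have hζ := ec_ne_zero ζ
  rw [cmvFun_zero, cmvFun_odd 0, cmvFun_even 0]
  simp only [orthoFun_zero, revFun_zero] at h₀
  simp only [mul_zero, zero_add, Nat.cast_one, zpow_neg_one]
  field_simp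
  linear_combination ec ζ * h₀ + rho α 0 * h₁

lemma ec_mul_cmvFun_one (ζ : Torus) : ec ζ * cmvFun α 1 ζ =
    rho α 0 * cmvFun α 0 ζ - α 0 * conj (α 1) * cmvFun α 1 ζ - α 0 * rho α 1 * cmvFun α 2 ζ := by
  have h₀ := rho_mul_revFun hα 0 ζ
  have h₁ := ec_mul_orthoFun hα 1 ζ
  have hζ := ec_ne_zero ζ
  rw [cmvFun_zero, cmvFun_odd 0, cmvFun_even 0]
  rw [revFun_zero] at h₀
  simp only [mul_zero, zero_add, Nat.cast_one, zpow_neg_one]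
  field_simp
  linear_combination -ec ζ * h₀ - α 0 * h₁

lemma ec_mul_cmvFun_even (b : ℕ) (ζ : Torus) : ec ζ * cmvFun α (2 * b + 2) ζ =
    rho α (2 * b + 1) * conj (α (2 * b + 2)) * cmvFun α (2 * b + 1) ζ
      - α (2 * b + 1) * conj (α (2 * b + 2)) * cmvFun α (2 * b + 2) ζ
      + rho α (2 * b + 2) * conj (α (2 * b + 3)) * cmvFun α (2 * b + 3) ζ
      + rho α (2 * b + 2) * rho α (2 * b + 3) * cmvFun α (2 * b + 4) ζ := by
  have h₁ := rho_mul_revFun hα (2 * b + 1) ζ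
  have h₂ := ec_mul_orthoFun hα (2 * b + 2) ζ
  have h₃ := ec_mul_orthoFun hα (2 * b + 3) ζ
  have hodd : cmvFun α (2 * b + 3) ζ = ec ζ ^ (-((b + 1 + 1 : ℕ) : ℤ)) * revFun α (2 * b + 3) ζ :=
    cmvFun_odd (b + 1) ζ
  have heven : cmvFun α (2 * b + 4) ζ =
      ec ζ ^ (-((b + 1 + 1 : ℕ) : ℤ)) * orthoFun α (2 * b + 4) ζ := cmvFun_even (b + 1) ζ
  rw [cmvFun_odd b, cmvFun_even b, hodd, heven, ec_zpow_neg_succ b]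
  linear_combination ec ζ ^ (-((b + 1 + 1 : ℕ) : ℤ)) *
    (ec ζ * h₂ + rho α (2 * b + 2) * h₃ - ec ζ * conj (α (2 * b + 2)) * h₁)

lemma ec_mul_cmvFun_odd (b : ℕ) (ζ : Torus) : ec ζ * cmvFun α (2 * b + 3) ζ =
    rho α (2 * b + 1) * rho α (2 * b + 2) * cmvFun α (2 * b + 1) ζ
      - rho α (2 * b + 2) * α (2 * b + 1) * cmvFun α (2 * b + 2) ζ
      - α (2 * b + 2) * conj (α (2 * b + 3)) * cmvFun α (2 * b + 3) ζ
      - α (2 * b + 2) * rho α (2 * b + 3) * cmvFun α (2 * b + 4) ζ := by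
  have h₁ := rho_mul_revFun hα (2 * b + 1) ζ
  have h₂ := rho_mul_revFun hα (2 * b + 2) ζ
  have h₃ := ec_mul_orthoFun hα (2 * b + 3) ζ
  have hodd : cmvFun α (2 * b + 3) ζ = ec ζ ^ (-((b + 1 + 1 : ℕ) : ℤ)) * revFun α (2 * b + 3) ζ :=
    cmvFun_odd (b + 1) ζ
  have heven : cmvFun α (2 * b + 4) ζ =
      ec ζ ^ (-((b + 1 + 1 : ℕ) : ℤ)) * orthoFun α (2 * b + 4) ζ := cmvFun_even (b + 1) ζ
  rw [cmvFun_odd b, cmvFun_even b, hodd, heven, ec_zpow_neg_succ b]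
  linear_combination ec ζ ^ (-((b + 1 + 1 : ℕ) : ℤ)) *
    (-ec ζ * h₂ - α (2 * b + 2) * h₃ - ec ζ * rho α (2 * b + 2) * h₁)

end CMVMatrix

section PhaseCoefficients

variable {r : ℝ} (hr : |r| < 1) (η : ℕ → Torus)

/-- The Verblunsky coefficients `α_n = r e^{iη_n}`. -/
def phaseCoeff (r : ℝ) (η : ℕ → Torus) (n : ℕ) : ℂ := r * ec (η n)

lemma conj_phaseCoeff (n : ℕ) : conj (phaseCoeff r η n) = r * ec (-η n) := by
  simp [phaseCoeff, ec_neg]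

lemma rho_phaseCoeff (n : ℕ) : rho (phaseCoeff r η) n = √(1 - r ^ 2) := by
  simp [rho, phaseCoeff, norm_ec]

lemma phaseCoeff_mul_conj (m n : ℕ) :
    phaseCoeff r η m * conj (phaseCoeff r η n) = (r ^ 2 : ℝ) * ec (η m - η n) := by
  rw [conj_phaseCoeff, phaseCoeff, sub_eq_add_neg, ec_add]
  push_cast
  ring

include hr

lemma norm_phaseCoeff_lt_one (n : ℕ) : ‖phaseCoeff r η n‖ < 1 := by
  simpa [phaseCoeff, norm_ec] using hr

lemma hasSum_CentA_mul_cmvFun_of_le_one (ζ : Torus) {k : ℕ} (hk : k ≤ 1) :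
    HasSum (fun j ↦ CentA r √(1 - r ^ 2) η k j * cmvFun (phaseCoeff r η) j ζ)
      (ec ζ * cmvFun (phaseCoeff r η) k ζ) := by
  have hα := norm_phaseCoeff_lt_one hr η
  have hzero : ∀ j ∉ Finset.range 3,
      CentA r √(1 - r ^ 2) η k j * cmvFun (phaseCoeff r η) j ζ = 0 := fun j hj ↦ by
    rw [Finset.mem_range] at hj
    interval_cases k <;>
      simp [CentA, show j ≠ 0 by lia, show j ≠ 1 by lia, show j ≠ 2 by lia]
  convert hasSum_sum_of_ne_finset_zero (L := .unconditional ℕ) hzero using 1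
  interval_cases k
  · rw [ec_mul_cmvFun_zero hα]
    simp [Finset.sum_range_succ, CentA, conj_phaseCoeff, rho_phaseCoeff]
    ring
  · rw [ec_mul_cmvFun_one hα, phaseCoeff_mul_conj]
    simp [Finset.sum_range_succ, CentA, rho_phaseCoeff, phaseCoeff]
    ring

lemma hasSum_CentA_mul_cmvFun_of_one_lt (ζ : Torus) {k : ℕ} (hk : 1 < k) :
    HasSum (fun j ↦ CentA r √(1 - r ^ 2) η k j * cmvFun (phaseCoeff r η) j ζ)
      (ec ζ * cmvFun (phaseCoeff r η) k ζ) := by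
  have hα := norm_phaseCoeff_lt_one hr η
  obtain ⟨b, hb⟩ : ∃ b, k = 2 * b + 2 ∨ k = 2 * b + 3 := ⟨(k - 2) / 2, by lia⟩
  have hzero : ∀ j ∉ ({2 * b + 1, 2 * b + 2, 2 * b + 3, 2 * b + 4} : Finset ℕ),
      CentA r √(1 - r ^ 2) η k j * cmvFun (phaseCoeff r η) j ζ = 0 := fun j hj ↦ by
    simp only [Finset.mem_insert, Finset.mem_singleton, not_or] at hj
    rw [CentA]
    grind
  convert hasSum_sum_of_ne_finset_zero (L := .unconditional ℕ) hzero using 1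
  rw [Finset.sum_insert (by simp), Finset.sum_insert (by simp), Finset.sum_insert (by simp),
    Finset.sum_singleton]
  rcases hb with rfl | rfl
  · rw [ec_mul_cmvFun_even hα, phaseCoeff_mul_conj]
    simp [CentA, conj_phaseCoeff, rho_phaseCoeff]
    ring
  · rw [ec_mul_cmvFun_odd hα, phaseCoeff_mul_conj]
    simp [CentA, rho_phaseCoeff, phaseCoeff]
    ring

lemma eq_ec_smul_of_forall_apply_eq_cmvFun {C : Hn →L[ℂ] Hn}
    (hC : ∀ k j, inner (𝕜 := ℂ) (en k) (C (en j)) = CentA r √(1 - r ^ 2) η k j)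
    {ζ : Torus} {ψ : Hn} (hψ : ∀ k, ψ k = cmvFun (phaseCoeff r η) k ζ) : C ψ = ec ζ • ψ := by
  ext k
  have hsum := (innerSL ℂ (en k)).hasSum (C.hasSum (lp.hasSum_single (by norm_num) ψ))
  have hterm (j : ℕ) : innerSL ℂ (en k) (C (lp.single 2 j (ψ j))) =
      CentA r √(1 - r ^ 2) η k j * cmvFun (phaseCoeff r η) j ζ := by
    have hsingle : lp.single 2 j (ψ j) = ψ j • en j := by
      rw [en, ← lp.single_smul, smul_eq_mul, mul_one]
    rw [hsingle, map_smul, map_smul, innerSL_apply_apply, hC, hψ, smul_eq_mul, mul_comm]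
  have hrow : HasSum (fun j ↦ CentA r √(1 - r ^ 2) η k j * cmvFun (phaseCoeff r η) j ζ)
      (ec ζ * cmvFun (phaseCoeff r η) k ζ) :=
    (le_or_gt k 1).elim (hasSum_CentA_mul_cmvFun_of_le_one hr η ζ)
      (hasSum_CentA_mul_cmvFun_of_one_lt hr η ζ)
  simp only [hterm] at hsum
  have hinner : innerSL ℂ (en k) (C ψ) = C ψ k := by simp [en, lp.inner_single_left]
  rw [← hinner, hsum.unique hrow, ← hψ]
  rfl

end PhaseCoefficients

section SpectralCriterion

variable {X : Type*} [TopologicalSpace X] [CompactSpace X] [MeasurableSpace X] [BorelSpace X]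
  {μ : Measure X} [IsFiniteMeasure μ] {u : ℕ → X → ℂ}

lemma ae_memℓp_two_of_summable_integral_norm (hu : ∀ k, Continuous (u k))
    (hsum : Summable fun k ↦ ∫ x, ‖u k x‖ ∂μ) : ∀ᵐ x ∂μ, Memℓp (fun k ↦ u k x) 2 := by
  have hmeas (k : ℕ) : AEMeasurable (fun x ↦ ‖u k x‖ₑ) μ := (hu k).enorm.measurable.aemeasurable
  have hfin : ∫⁻ x, ∑' k, ‖u k x‖ₑ ∂μ ≠ ∞ := by
    rw [lintegral_tsum hmeas]
    simp_rw [← ofReal_integral_norm_eq_lintegral_enorm (integrable_of_continuous (hu _))]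
    exact hsum.tsum_ofReal_ne_top
  filter_upwards [ae_lt_top' (AEMeasurable.tsum hmeas) hfin] with x hx
  have hx1 : Memℓp (fun k ↦ u k x) 1 := by
    rw [memℓp_gen_iff (by norm_num)]
    simpa using ENNReal.summable_toReal hx.ne
  exact hx1.of_exponent_ge (by norm_num)

lemma hasSum_integral_mul_conj_mul (hu : ∀ k, Continuous (u k))
    (hsum : Summable fun k ↦ ∫ x, ‖u k x‖ ∂μ) (j : ℕ) (ψ : Hn) :
    HasSum (fun k ↦ ∫ x, u j x * (conj (u k x) * ψ k) ∂μ)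
      (∫ x, ∑' k, u j x * (conj (u k x) * ψ k) ∂μ) := by
  obtain ⟨B, hB⟩ := isCompact_univ.exists_bound_of_continuousOn (hu j).continuousOn
  refine hasSum_integral_of_summable_integral_norm
    (fun k ↦ integrable_of_continuous (by fun_prop))
    (.of_nonneg_of_le (fun k ↦ integral_nonneg fun _ ↦ norm_nonneg _) (fun k ↦ ?_)
      (hsum.mul_left (B * ‖ψ‖)))
  rw [← integral_const_mul]
  refine integral_mono (integrable_of_continuous (by fun_prop))
    (integrable_of_continuous (by fun_prop)) fun x ↦ ?_
  have hj := hB x (Set.mem_univ x)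
  have hψ := lp.norm_apply_le_norm (by norm_num) ψ k
  calc ‖u j x * (conj (u k x) * ψ k)‖ = ‖u j x‖ * (‖u k x‖ * ‖ψ k‖) := by simp
    _ ≤ B * (‖u k x‖ * ‖ψ‖) := by
      gcongr
      exact (norm_nonneg _).trans hj
    _ = B * ‖ψ‖ * ‖u k x‖ := by ring

/- The map `ψ ↦ ∑ ψ_k conj(u_k)` is an isometry into `L²(μ)` by orthonormality, and it sends a
vector orthogonal to all `(u_k(x))_k` to zero. -/
theorem topologicalClosure_span_eq_top_of_orthonormal (hu : ∀ k, Continuous (u k))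
    (horth : ∀ j k, ∫ x, conj (u j x) * u k x ∂μ = if j = k then 1 else 0)
    (hsum : Summable fun k ↦ ∫ x, ‖u k x‖ ∂μ) {S : Set Hn}
    (hS : ∀ (x : X) (χ : Hn), (∀ k, χ k = u k x) → χ ∈ S) :
    (Submodule.span ℂ S).topologicalClosure = ⊤ := by
  rw [Submodule.topologicalClosure_eq_top_iff, Submodule.eq_bot_iff]
  intro ψ hψ
  rw [Submodule.mem_orthogonal] at hψ
  have hzero : ∀ᵐ x ∂μ, ∑' k, conj (u k x) * ψ k = 0 := by
    filter_upwards [ae_memℓp_two_of_summable_integral_norm hu hsum] with x hx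
    let χ : Hn := ⟨fun k ↦ u k x, hx⟩
    have hinner := lp.hasSum_inner (𝕜 := ℂ) χ ψ
    rw [hψ χ (Submodule.subset_span (hS x χ fun _ ↦ rfl))] at hinner
    simpa [mul_comm] using hinner.tsum_eq
  ext j
  have hterm (k : ℕ) :
      ∫ x, u j x * (conj (u k x) * ψ k) ∂μ = if k = j then ψ j else 0 := by
    simp_rw [show ∀ x, u j x * (conj (u k x) * ψ k) = conj (u k x) * u j x * ψ k by intro; ring]
    rw [integral_mul_const, horth]
    split_ifs with h <;> simp [h]
  have hcoeff := hasSum_integral_mul_conj_mul hu hsum j ψ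
  simp only [hterm] at hcoeff
  have hint : ∫ x, ∑' k, u j x * (conj (u k x) * ψ k) ∂μ = 0 := by
    refine integral_eq_zero_of_ae ?_
    filter_upwards [hzero] with x hx
    rw [tsum_mul_left, hx, mul_zero, Pi.zero_apply]
  rw [hint] at hcoeff
  simpa using (hasSum_ite_eq j (ψ j)).unique hcoeff

theorem topologicalClosure_span_eigenvectors_eq_top {r : ℝ} (hr : |r| < 1) {η : ℕ → Torus}
    {C : Hn →L[ℂ] Hn} (hC : ∀ k j, inner (𝕜 := ℂ) (en k) (C (en j)) = CentA r √(1 - r ^ 2) η k j)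
    {μ : Measure Torus} [IsFiniteMeasure μ]
    (horth : ∀ j k, ∫ ζ, conj (cmvFun (phaseCoeff r η) j ζ) * cmvFun (phaseCoeff r η) k ζ ∂μ =
      if j = k then 1 else 0)
    (hsum : Summable fun k ↦ ∫ ζ, ‖cmvFun (phaseCoeff r η) k ζ‖ ∂μ) :
    (Submodule.span ℂ {ψ : Hn | ψ ≠ 0 ∧ ∃ μ : ℂ, C ψ = μ • ψ}).topologicalClosure = ⊤ := by
  refine topologicalClosure_span_eq_top_of_orthonormal (continuous_cmvFun _) horth hsum
    fun ζ ψ hψ ↦ ⟨fun h ↦ ?_, ec ζ, eq_ec_smul_of_forall_apply_eq_cmvFun hr η hC hψ⟩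
  simpa [h, cmvFun_zero] using hψ 0

end SpectralCriterion

section PhaseMap

lemma ec_coe (a : ℝ) : ec (a : Torus) = exp (a * I) := by
  rw [ec, AddCircle.toCircle_apply_mk]
  simp [Circle.coe_exp]

lemma ec_zsmul (n : ℤ) (x : Torus) : ec (n • x) = ec x ^ n := by
  simp [ec, AddCircle.toCircle_zsmul]

/-- The factor by which `‖φ_n(e^{iζ})‖⁻¹` changes in the `n`-th step of the Szegő recursion, as a
function of the current Prüfer phase `y`. -/
def phaseWeight (r : ℝ) (y : Torus) : ℝ := √(1 - r ^ 2) / ‖1 - r * ec y‖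

/-- The action of the Möbius transformation `z ↦ (z - r) / (1 - r z)` on the angle `y` of a point
`z = e^{iy}` of the unit circle. -/
def phaseMap (r : ℝ) (y : Torus) : Torus := y - (2 : ℤ) • ((arg (1 - r * ec y) : ℝ) : Torus)

/-- The Prüfer phases: they start from `x`, and each step rotates by `ζ + ω n` and then applies
`phaseMap r`. -/
def pruferPhase (r : ℝ) (ζ x : Torus) (ω : ℕ → Torus) : ℕ → Torus
  | 0 => x
  | n + 1 => phaseMap r (pruferPhase r ζ x ω n + ζ + ω n)

lemma pruferPhase_succ_eq_shift (r : ℝ) (ζ x : Torus) (ω : ℕ → Torus) (n : ℕ) :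
    pruferPhase r ζ x ω (n + 1) =
      pruferPhase r ζ (phaseMap r (x + ζ + ω 0)) (fun i ↦ ω (i + 1)) n := by
  induction n with
  | zero => rfl
  | succ n ih => rw [pruferPhase, ih, pruferPhase]

variable {r : ℝ} (hr : |r| < 1)
include hr

lemma one_sub_sq_pos : 0 < 1 - r ^ 2 := by
  linarith [(sq_lt_one_iff_abs_lt_one r).2 hr]

lemma re_one_sub_mul_pos {z : ℂ} (hz : ‖z‖ ≤ 1) : 0 < (1 - r * z).re := by
  have h : |r * z.re| < 1 := by
    rw [abs_mul]
    nlinarith [abs_re_le_norm z, abs_nonneg z.re, abs_nonneg r]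
  simpa using (le_abs_self _).trans_lt h

lemma one_sub_mul_ne_zero {z : ℂ} (hz : ‖z‖ ≤ 1) : 1 - r * z ≠ 0 := fun h ↦
  (re_one_sub_mul_pos hr hz).ne' (by rw [h, zero_re])

lemma phaseWeight_pos (y : Torus) : 0 < phaseWeight r y :=
  div_pos (Real.sqrt_pos.2 (one_sub_sq_pos hr))
    (norm_pos_iff.2 (one_sub_mul_ne_zero hr (norm_ec y).le))

lemma continuous_phaseWeight : Continuous (phaseWeight r) :=
  continuous_const.div (by fun_prop)
    fun y ↦ norm_ne_zero_iff.2 (one_sub_mul_ne_zero hr (norm_ec y).le)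

lemma continuous_phaseMap : Continuous (phaseMap r) := by
  have harg : Continuous fun y ↦ arg (1 - r * ec y) := by
    rw [continuous_iff_continuousAt]
    exact fun y ↦ (continuousAt_arg (.inl (re_one_sub_mul_pos hr (norm_ec y).le))).comp
      (f := fun y ↦ 1 - r * ec y) (by fun_prop)
  exact continuous_id.sub (((AddCircle.continuous_mk' _).comp harg).zsmul 2)

lemma ec_phaseMap (y : Torus) : ec (phaseMap r y) = (ec y - r) / (1 - r * ec y) := by
  have hw : 1 - r * ec y ≠ 0 := one_sub_mul_ne_zero hr (norm_ec y).le
  have hconj : conj (1 - r * ec y) = (ec y - r) / ec y := by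
    have := ec_ne_zero y
    simp only [map_sub, map_one, map_mul, conj_ofReal, conj_ec]
    field_simp
  set w := 1 - r * ec y
  have harg : ec ((arg w : ℝ) : Torus) = w / ‖w‖ := by
    rw [ec_coe, eq_div_iff (by simpa using hw), mul_comm, norm_mul_exp_arg_mul_I]
  have hnorm : ((‖w‖ : ℂ)) ^ 2 = w * conj w := (mul_conj' w).symm
  have hconj_ne : conj w ≠ 0 := (map_ne_zero _).2 hw
  rw [phaseMap, ec_sub, ec_zsmul, harg]
  calc ec y * conj ((w / ‖w‖) ^ (2 : ℤ)) = ec y * conj w ^ 2 / (‖w‖ : ℂ) ^ 2 := by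
        simp [zpow_ofNat, div_pow, mul_div_assoc]
    _ = ec y * conj w / w := by
      rw [hnorm]
      field_simp
    _ = (ec y - r) / w := by rw [hconj, mul_div_cancel₀ _ (ec_ne_zero y)]

lemma continuous_pruferPhase (n : ℕ) :
    Continuous fun q : Torus × Torus × (ℕ → Torus) ↦ pruferPhase r q.1 q.2.1 q.2.2 n := by
  induction n with
  | zero => exact continuous_snd.fst
  | succ n ih => exact (continuous_phaseMap hr).comp (by fun_prop)

end PhaseMap

section Prufer

variable {r : ℝ} (hr : |r| < 1) (ζ : Torus) (ω : ℕ → Torus)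
include hr

lemma ec_pruferPhase_mul_revFun (n : ℕ) :
    ec (pruferPhase r ζ 0 ω n + ζ + ω n) *
        revFun (phaseCoeff r fun m ↦ ∑ i ∈ Finset.range (m + 1), ω i) n ζ =
      ec (∑ i ∈ Finset.range (n + 1), ω i) *
        (ec ζ * orthoFun (phaseCoeff r fun m ↦ ∑ i ∈ Finset.range (m + 1), ω i) n ζ) := by
  set η : ℕ → Torus := fun m ↦ ∑ i ∈ Finset.range (m + 1), ω i
  induction n with
  | zero => simp [pruferPhase, orthoFun_zero, revFun_zero, ec_add, mul_comm]
  | succ n ih =>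
    set e := ec (pruferPhase r ζ 0 ω n + ζ + ω n)
    have hmap : ec (phaseMap r (pruferPhase r ζ 0 ω n + ζ + ω n)) * (1 - r * e) = e - r := by
      rw [ec_phaseMap hr, div_mul_cancel₀ _ (one_sub_mul_ne_zero hr (norm_ec _).le)]
    have hη : ec (η n) * ec (-η n) = 1 := by rw [← ec_add, add_neg_cancel, ec_zero]
    change e * _ = ec (η n) * _ at ih
    rw [Finset.sum_range_succ, ec_add, ec_add, ec_add, pruferPhase, orthoFun_succ, revFun_succ,
      conj_phaseCoeff, phaseCoeff]
    change _ = ec (η n) * ec (ω (n + 1)) * _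
    set φ := orthoFun (phaseCoeff r η) n ζ
    set φs := revFun (phaseCoeff r η) n ζ
    linear_combination (rho (phaseCoeff r η) n : ℂ)⁻¹ * ec ζ * ec (ω (n + 1)) *
      (φs * hmap + (1 + r * ec (phaseMap r (pruferPhase r ζ 0 ω n + ζ + ω n))) * ih + r * φs * hη)

lemma inv_norm_orthoFun_eq_prod (n : ℕ) :
    ‖orthoFun (phaseCoeff r fun m ↦ ∑ i ∈ Finset.range (m + 1), ω i) n ζ‖⁻¹ =
      ∏ i ∈ Finset.range n, phaseWeight r (pruferPhase r ζ 0 ω i + ζ + ω i) := by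
  set η : ℕ → Torus := fun m ↦ ∑ i ∈ Finset.range (m + 1), ω i
  simp_rw [← norm_revFun]
  induction n with
  | zero => simp [revFun_zero]
  | succ n ih =>
    have hstep : revFun (phaseCoeff r η) n ζ -
        phaseCoeff r η n * (ec ζ * orthoFun (phaseCoeff r η) n ζ) =
        (1 - r * ec (pruferPhase r ζ 0 ω n + ζ + ω n)) * revFun (phaseCoeff r η) n ζ := by
      rw [phaseCoeff]
      linear_combination r * ec_pruferPhase_mul_revFun hr ζ ω n
    rw [Finset.prod_range_succ, ← ih, revFun_succ, hstep, rho_phaseCoeff, phaseWeight]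
    simp only [norm_mul, norm_inv, norm_real, Real.norm_of_nonneg (Real.sqrt_nonneg _), mul_inv,
      inv_inv]
    ring

end Prufer

section InvariantMeasure

lemma measure_ext_of_integral_ec_pow {μ ν : Measure Torus} [IsFiniteMeasure μ] [IsFiniteMeasure ν]
    (h : ∀ n : ℕ, ∫ y, ec y ^ n ∂μ = ∫ y, ec y ^ n ∂ν) : μ = ν := by
  have hz (n : ℤ) : ∫ y, ec y ^ n ∂μ = ∫ y, ec y ^ n ∂ν := by
    obtain ⟨m, rfl | rfl⟩ := n.eq_nat_or_neg
    · simpa using h m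
    · have := congrArg conj (h m)
      rw [← integral_conj, ← integral_conj] at this
      simpa [conj_ec] using this
  refine ext_of_forall_mem_subalgebra_integral_eq_of_polish (𝕜 := ℂ)
    (A := fourierSubalgebra.comap (BoundedContinuousFunction.toContinuousMapStarₐ ℂ)) ?_ ?_
  · intro x y hxy
    obtain ⟨_, ⟨f, hf, rfl⟩, hne⟩ := fourierSubalgebra_separatesPoints hxy
    exact ⟨f, ⟨f, ⟨BoundedContinuousFunction.mkOfCompact f, hf, rfl⟩, rfl⟩, hne⟩
  · intro g hg
    have hspan : g.toContinuousMap ∈ Submodule.span ℂ (Set.range (@fourier (2 * Real.pi))) := by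
      rw [← fourierSubalgebra_coe]
      exact hg
    change ∫ x, g.toContinuousMap x ∂μ = ∫ x, g.toContinuousMap x ∂ν
    generalize g.toContinuousMap = f at hspan
    induction hspan using Submodule.span_induction with
    | mem f hf =>
      obtain ⟨n, rfl⟩ := hf
      simpa only [fourier_eq_ec_zpow] using hz n
    | zero => simp
    | add f g _ _ hf hg =>
      simp only [ContinuousMap.add_apply]
      rw [integral_add, integral_add, hf, hg] <;> exact integrable_of_continuous (by fun_prop)
    | smul c f _ hf =>
      simp only [ContinuousMap.smul_apply]
      rw [integral_smul, integral_smul, hf]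

lemma integral_ec_pow (n : ℕ) : ∫ y, ec y ^ n ∂haarAddCircle = 0 ^ n :=
  integral_ec_of_differentiableAt (F := (· ^ n)) fun _ _ ↦ by fun_prop

variable {r : ℝ} (hr : |r| < 1)
include hr

lemma phaseWeight_sq (y : Torus) : phaseWeight r y ^ 2 = poissonKernel 0 r (ec y) := by
  have hnorm : ‖1 - r * ec y‖ = ‖ec y - r‖ := by
    have : 1 - r * ec y = ec y * conj (ec y - r) := by
      rw [map_sub, conj_ofReal, mul_sub, ec_mul_conj, mul_comm]
    rw [this, norm_mul, norm_ec, one_mul, norm_conj]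
  simp [phaseWeight, poissonKernel_def, div_pow, hnorm, norm_ec,
    Real.sq_sqrt (one_sub_sq_pos hr).le]

lemma measurable_ofReal_phaseWeight_sq :
    Measurable fun y ↦ ENNReal.ofReal (phaseWeight r y ^ 2) :=
  ((continuous_phaseWeight hr).pow 2).measurable.ennreal_ofReal

lemma integral_phaseWeight_sq_mul_ec_phaseMap_pow (n : ℕ) :
    ∫ y, ((phaseWeight r y ^ 2 : ℝ) : ℂ) * ec (phaseMap r y) ^ n ∂haarAddCircle = 0 ^ n := by
  have hdiff : DiffContOnCl ℂ (fun z : ℂ ↦ ((z - r) / (1 - r * z)) ^ n) (Metric.ball 0 1) := by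
    refine DifferentiableOn.diffContOnCl fun z hz ↦ DifferentiableAt.differentiableWithinAt ?_
    have := one_sub_mul_ne_zero hr
      (mem_closedBall_zero_iff.1 (Metric.closure_ball_subset_closedBall hz))
    fun_prop (disch := assumption)
  have hpoisson := hdiff.circleAverage_poissonKernel_smul
    (w := (r : ℂ)) (by simpa using hr)
  rw [← integral_ec_eq_circleAverage] at hpoisson
  simpa [phaseWeight_sq hr, ec_phaseMap hr] using hpoisson

theorem map_phaseMap_withDensity :
    (haarAddCircle.withDensity fun y ↦ ENNReal.ofReal (phaseWeight r y ^ 2)).map (phaseMap r) =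
      haarAddCircle := by
  have : IsFiniteMeasure
      (haarAddCircle.withDensity fun y ↦ ENNReal.ofReal (phaseWeight r y ^ 2)) :=
    isFiniteMeasure_withDensity_ofReal
      (integrable_of_continuous ((continuous_phaseWeight hr).pow 2)).2
  refine measure_ext_of_integral_ec_pow fun n ↦ ?_
  have hpow : Continuous fun y ↦ ec y ^ n := by fun_prop
  rw [integral_map (continuous_phaseMap hr).measurable.aemeasurable
      hpow.aestronglyMeasurable,
    integral_withDensity_eq_integral_toReal_smul (measurable_ofReal_phaseWeight_sq hr)
      (.of_forall fun _ ↦ ENNReal.ofReal_lt_top), integral_ec_pow,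
    ← integral_phaseWeight_sq_mul_ec_phaseMap_pow hr n]
  simp only [ENNReal.toReal_ofReal (sq_nonneg _), real_smul]

lemma lintegral_phaseWeight_sq_mul_comp_phaseMap {f : Torus → ℝ≥0∞} (hf : Measurable f) :
    ∫⁻ y, ENNReal.ofReal (phaseWeight r y ^ 2) * f (phaseMap r y) ∂haarAddCircle =
      ∫⁻ y, f y ∂haarAddCircle := by
  have hmap := (continuous_phaseMap hr).measurable
  conv_rhs => rw [← map_phaseMap_withDensity hr, lintegral_map hf hmap]
  exact (lintegral_withDensity_eq_lintegral_mul _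
    (measurable_ofReal_phaseWeight_sq hr) (hf.comp hmap)).symm

lemma integral_phaseWeight_sq_mul_comp_phaseMap {f : Torus → ℝ} (hf : Continuous f) :
    ∫ y, phaseWeight r y ^ 2 * f (phaseMap r y) ∂haarAddCircle = ∫ y, f y ∂haarAddCircle := by
  conv_rhs =>
    rw [← map_phaseMap_withDensity hr,
      integral_map (continuous_phaseMap hr).measurable.aemeasurable hf.aestronglyMeasurable,
      integral_withDensity_eq_integral_toReal_smul (measurable_ofReal_phaseWeight_sq hr)
        (.of_forall fun _ ↦ ENNReal.ofReal_lt_top)]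
  simp only [ENNReal.toReal_ofReal (sq_nonneg _), smul_eq_mul]

end InvariantMeasure

section FourierGap

lemma exists_restrict_le_smul_of_withDensity_rnDeriv_ne_zero {X : Type*} [MeasurableSpace X]
    {μ ν : Measure X} [SigmaFinite ν] [ν.HaveLebesgueDecomposition μ]
    (hac : μ.withDensity (ν.rnDeriv μ) ≠ 0) :
    ∃ (G : Set X) (c : ℝ≥0), MeasurableSet G ∧ ν G ≠ 0 ∧ ν.restrict G ≤ c • μ := by
  obtain ⟨S, hS, hS_sing, hS_ac⟩ := Measure.mutuallySingular_singularPart ν μ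
  have hf := Measure.measurable_rnDeriv ν μ
  let G (n : ℕ) : Set X := S ∩ {x | ν.rnDeriv μ x ≤ n}
  have hG (n : ℕ) : MeasurableSet (G n) := hS.inter (measurableSet_le hf measurable_const)
  obtain ⟨n, hn⟩ : ∃ n, 0 < μ.withDensity (ν.rnDeriv μ) (G n) := by
    refine exists_measure_pos_of_not_measure_iUnion_null fun h ↦ hac ?_
    rw [← Measure.measure_univ_eq_zero, ← h]
    refine measure_congr ?_
    have hmem : ∀ᵐ x ∂μ, x ∈ ⋃ n, G n := by
      have hS_ae : ∀ᵐ x ∂μ, x ∈ S := hS_ac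
      filter_upwards [hS_ae, Measure.rnDeriv_lt_top ν μ] with x hx hx'
      obtain ⟨n, hn⟩ := ENNReal.exists_nat_gt hx'.ne
      exact Set.mem_iUnion.2 ⟨n, hx, hn.le⟩
    exact (eventuallyEq_univ.2 ((withDensity_absolutelyContinuous _ _).ae_le hmem)).symm
  refine ⟨G n, n, hG n, (hn.trans_le (Measure.withDensity_rnDeriv_le ν μ _)).ne', ?_⟩
  have hsing : (ν.singularPart μ).restrict (G n) = 0 :=
    Measure.restrict_eq_zero.2 (measure_mono_null Set.inter_subset_left hS_sing)
  rw [Measure.haveLebesgueDecomposition_add ν μ, Measure.restrict_add, hsing, zero_add,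
    restrict_withDensity (hG n)]
  calc (μ.restrict (G n)).withDensity (ν.rnDeriv μ)
      ≤ (μ.restrict (G n)).withDensity fun _ ↦ (n : ℝ≥0∞) :=
        withDensity_mono ((ae_restrict_mem (hG n)).mono fun x hx ↦ hx.2)
    _ = (n : ℝ≥0) • μ.restrict (G n) := by
        rw [withDensity_const, ENNReal.smul_def, ENNReal.coe_natCast]
    _ ≤ (n : ℝ≥0) • μ := by gcongr; exact Measure.restrict_le_self

lemma exists_pos_measure_lt_of_ae_pos {X : Type*} [MeasurableSpace X] {μ : Measure X}
    [IsFiniteMeasure μ] {f : X → ℝ} (hf : Measurable f) (hpos : ∀ᵐ x ∂μ, 0 < f x) {ε : ℝ≥0∞}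
    (hε : ε ≠ 0) : ∃ δ > 0, μ {x | f x < δ} < ε := by
  have hlim := tendsto_measure_biInter_gt (μ := μ) (s := fun δ ↦ {x | f x < δ}) (a := (0 : ℝ))
    (fun _ _ ↦ (measurableSet_lt hf measurable_const).nullMeasurableSet)
    (fun _ _ _ hij _ hx ↦ lt_of_lt_of_le hx hij) ⟨1, one_pos, measure_ne_top _ _⟩
  have hzero : μ (⋂ δ > 0, {x | f x < δ}) = 0 := by
    refine measure_mono_null (fun x hx ↦ ?_) hpos
    simp only [gt_iff_lt, Set.mem_iInter, Set.mem_ofPred_eq] at hx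
    exact fun h ↦ lt_irrefl _ (hx (f x) h)
  rw [hzero] at hlim
  obtain ⟨δ, hδ, hδ_pos⟩ :=
    ((hlim.eventually (gt_mem_nhds hε.bot_lt)).and self_mem_nhdsWithin).exists
  exact ⟨δ, hδ_pos, hδ⟩

lemma ec_injective : Function.Injective ec := fun _ _ h ↦
  AddCircle.injective_toCircle (by positivity) (Circle.ext h)

instance : Nontrivial Torus :=
  nontrivial_of_ne ((Real.pi : ℝ) : Torus) 0 fun h ↦ by
    have := ec_coe Real.pi
    rw [h, ec_zero, exp_pi_mul_I] at this
    norm_num at this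

lemma ae_re_ec_lt_one : ∀ᵐ y ∂haarAddCircle (T := 2 * Real.pi), 0 < 1 - (ec y).re := by
  have hnull : (haarAddCircle (T := 2 * Real.pi)) {0} = 0 := measure_singleton 0
  refine measure_mono_null (fun y hy ↦ ?_) hnull
  have hre : (ec y).re = ‖ec y‖ :=
    le_antisymm (re_le_norm _) (by rw [norm_ec]; simpa using hy)
  apply ec_injective
  rw [ec_zero, eq_coe_norm_of_nonneg (re_eq_norm.1 hre), norm_ec, ofReal_one]

lemma measurePreserving_zsmul_add {n : ℤ} (hn : n ≠ 0) (a : Torus) :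
    MeasurePreserving (fun y : Torus ↦ n • y + a) haarAddCircle haarAddCircle :=
  (measurePreserving_add_right _ a).comp (Measure.measurePreserving_zsmul _ hn)

lemma exists_ec_mul_eq_norm (z : ℂ) : ∃ a, ec a * z = ‖z‖ := by
  refine ⟨-((arg z : ℝ) : Torus), ?_⟩
  nth_rw 2 [← norm_mul_exp_arg_mul_I z]
  rw [← ec_coe, mul_left_comm, mul_comm (ec (-_)), ec_neg, ec_mul_conj, mul_one]

section

variable (ν : Measure Torus) [IsProbabilityMeasure ν]

lemma exists_one_sub_norm_integral_ec_zpow_eq (n : ℤ) :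
    ∃ a, 1 - ‖∫ y, ec y ^ n ∂ν‖ = ∫ y, (1 - (ec (n • y + a)).re) ∂ν := by
  obtain ⟨a, ha⟩ := exists_ec_mul_eq_norm (∫ y, ec y ^ n ∂ν)
  refine ⟨a, ?_⟩
  have hint : Integrable (fun y ↦ ec (n • y + a)) ν := integrable_of_continuous (by fun_prop)
  have hint_re : Integrable (fun y ↦ (ec (n • y + a)).re) ν := hint.re
  rw [integral_sub (integrable_const 1) hint_re]
  have hre : ∫ y, (ec (n • y + a)).re ∂ν = ‖∫ y, ec y ^ n ∂ν‖ := by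
    rw [← ofReal_re ‖_‖, ← ha, ← integral_const_mul]
    simp_rw [mul_comm (ec a), ← ec_zsmul, ← ec_add]
    exact integral_re hint
  simp [hre]

variable {ν} {G : Set Torus} {c : ℝ≥0}

/-- Multiplication by `n ≠ 0` preserves Haar measure, so `n • y + a` is near `0` only with small
`ν`-probability on `G`, uniformly in `n` and `a`. -/
theorem exists_forall_norm_integral_ec_zpow_le (hG : ν G ≠ 0)
    (hle : ν.restrict G ≤ c • haarAddCircle) :
    ∃ q, 0 < q ∧ q < 1 ∧ ∀ n : ℤ, n ≠ 0 → ‖∫ y, ec y ^ n ∂ν‖ ≤ q := by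
  obtain ⟨δ, hδ, hsmall⟩ := exists_pos_measure_lt_of_ae_pos (ε := ν G / 2 / (c + 1)) (by fun_prop)
    ae_re_ec_lt_one (ENNReal.div_pos (ENNReal.half_pos hG).ne' (by finiteness)).ne'
  have hpos : 0 < ν.real G := ENNReal.toReal_pos hG (measure_ne_top _ _)
  refine ⟨max 2⁻¹ (1 - δ * (ν.real G / 2)), by positivity, max_lt (by norm_num) (by nlinarith),
    fun n hn ↦ le_max_of_le_right ?_⟩
  obtain ⟨a, ha⟩ := exists_one_sub_norm_integral_ec_zpow_eq ν n
  let u (y : Torus) : ℝ := 1 - (ec (n • y + a)).re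
  have hu : Continuous u := by fun_prop
  have hu_nonneg (y : Torus) : 0 ≤ u y := by
    simpa only [u, sub_nonneg, norm_ec] using re_le_norm (ec (n • y + a))
  have hE : MeasurableSet {y | u y < δ} := measurableSet_lt hu.measurable measurable_const
  have hbad : (ν.restrict G).real {y | u y < δ} ≤ ν.real G / 2 := by
    refine (ENNReal.toReal_mono (by finiteness) (?_ : _ ≤ ν G / 2)).trans_eq
      (by simp [Measure.real])
    have hpres := (measurePreserving_zsmul_add hn a).measure_preimage (s := {y | 1 - (ec y).re < δ})
      (measurableSet_lt (by fun_prop) measurable_const).nullMeasurableSet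
    calc ν.restrict G {y | u y < δ} ≤ c * haarAddCircle {y | u y < δ} := hle _
      _ ≤ (c + 1) * (ν G / 2 / (c + 1)) := by
        gcongr
        · exact le_self_add
        · exact hpres.trans_le hsmall.le
      _ = ν G / 2 := ENNReal.mul_div_cancel (by simp) (by finiteness)
  have hgood : ν.real G / 2 ≤ ν.real {y | δ ≤ u y} := by
    have hcompl : {y | u y < δ}ᶜ = {y | δ ≤ u y} := by ext; simp
    have hsplit := measureReal_add_measureReal_compl (μ := ν.restrict G) hE
    rw [hcompl, measureReal_restrict_apply_univ] at hsplit
    have hmono : (ν.restrict G).real {y | δ ≤ u y} ≤ ν.real {y | δ ≤ u y} :=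
      ENNReal.toReal_mono (by finiteness) (Measure.restrict_apply_le _ _)
    linarith
  have hmarkov := mul_meas_ge_le_integral_of_nonneg (μ := ν) (.of_forall hu_nonneg)
    (integrable_of_continuous hu) δ
  nlinarith

end

end FourierGap

section Contraction

lemma sq_integral_mul_le {f g : Torus → ℝ} (hf : Continuous f) (hg : Continuous g) :
    (∫ y, f y * g y ∂haarAddCircle) ^ 2 ≤
      (∫ y, f y ^ 2 ∂haarAddCircle) * ∫ y, g y ^ 2 ∂haarAddCircle := by
  have h := real_inner_mul_inner_self_le
    (ContinuousMap.toLp (E := ℝ) 2 (haarAddCircle (T := 2 * Real.pi)) ℝ ⟨f, hf⟩)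
    (ContinuousMap.toLp (E := ℝ) 2 haarAddCircle ℝ ⟨g, hg⟩)
  simpa only [ContinuousMap.inner_toLp, ContinuousMap.coe_mk, conj_trivial, ← pow_two, mul_comm]
    using h

lemma sq_integral_le {f : Torus → ℝ} (hf : Continuous f) :
    (∫ y, f y ∂haarAddCircle) ^ 2 ≤ ∫ y, f y ^ 2 ∂haarAddCircle := by
  simpa using sq_integral_mul_le hf (continuous_const (y := (1 : ℝ)))

lemma integral_sub_const_sq {f : Torus → ℝ} (hf : Continuous f) (c : ℝ) :
    ∫ y, (f y - c) ^ 2 ∂haarAddCircle =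
      ∫ y, f y ^ 2 ∂haarAddCircle - 2 * c * (∫ y, f y ∂haarAddCircle) + c ^ 2 := by
  simp only [sub_sq]
  rw [integral_add (integrable_of_continuous (by fun_prop)) (integrable_const _),
    integral_sub (integrable_of_continuous (by fun_prop)) (integrable_of_continuous (by fun_prop)),
    integral_mul_const, integral_const_mul, integral_const, probReal_univ, one_smul]
  ring

lemma hasSum_sq_norm_fourierCoeff {g : Torus → ℝ} (hg : Continuous g) :
    HasSum (fun n : ℤ ↦ ‖fourierCoeff (fun y ↦ (g y : ℂ)) n‖ ^ 2)
      (∫ y, g y ^ 2 ∂haarAddCircle) := by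
  let g' : C(Torus, ℂ) := ⟨fun y ↦ g y, by fun_prop⟩
  have hcoe := ContinuousMap.coeFn_toLp (E := ℂ) (p := 2) (𝕜 := ℂ) haarAddCircle g'
  have h := hasSum_sq_fourierCoeff (ContinuousMap.toLp (E := ℂ) 2 haarAddCircle ℂ g')
  rw [fourierCoeff_congr_ae hcoe] at h
  have hnorm : ∫ y, g y ^ 2 ∂haarAddCircle =
      ∫ y, ‖ContinuousMap.toLp (E := ℂ) 2 haarAddCircle ℂ g' y‖ ^ 2 ∂haarAddCircle := by
    refine integral_congr_ae (hcoe.mono fun y hy ↦ ?_)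
    simp only [hy, g', ContinuousMap.coe_mk, norm_real, Real.norm_eq_abs, sq_abs]
  rw [hnorm]
  exact h

lemma fourierCoeff_zero_ofReal (g : Torus → ℝ) :
    fourierCoeff (fun y ↦ (g y : ℂ)) 0 = (∫ y, g y ∂haarAddCircle : ℝ) := by
  simp only [fourierCoeff, neg_zero, fourier_zero, one_smul]
  exact integral_complex_ofReal

/-- The average of `g (x + ζ + θ)` over a `ν`-distributed angle `θ`. -/
def convAverage (ν : Measure Torus) (ζ : Torus) (g : Torus → ℝ) (x : Torus) : ℝ :=
  ∫ θ, g (x + ζ + θ) ∂ν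

section ConvAverage

variable (ν : Measure Torus) [IsProbabilityMeasure ν] (ζ : Torus) {g : Torus → ℝ}
  (hg : Continuous g)
include hg

lemma continuous_convAverage : Continuous (convAverage ν ζ g) := by
  obtain ⟨B, hB⟩ := isCompact_univ.exists_bound_of_continuousOn hg.continuousOn
  exact continuous_of_dominated (fun x ↦ by fun_prop)
    (fun x ↦ .of_forall fun θ ↦ hB _ (Set.mem_univ _)) (integrable_const _)
    (.of_forall fun θ ↦ by fun_prop)

lemma fourierCoeff_convAverage (n : ℤ) :
    fourierCoeff (fun y ↦ (convAverage ν ζ g y : ℂ)) n =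
      (∫ θ, ec θ ^ n ∂ν) * (ec ζ ^ n * fourierCoeff (fun y ↦ (g y : ℂ)) n) := by
  have hcont := continuous_ec_zpow (-n)
  have hrot (θ : Torus) : ∫ x, ec x ^ (-n) * (g (x + ζ + θ) : ℂ) ∂haarAddCircle =
      ec θ ^ n * (ec ζ ^ n * ∫ y, ec y ^ (-n) * (g y : ℂ) ∂haarAddCircle) := by
    rw [← integral_add_right_eq_self _ (-(ζ + θ)), ← mul_assoc, ← integral_const_mul]
    congr 1 with y
    rw [show y + -(ζ + θ) + ζ + θ = y by abel, ec_add, ec_neg, ec_add, map_mul, mul_zpow,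
      mul_zpow, ← map_zpow₀, ← map_zpow₀, conj_ec_zpow, conj_ec_zpow, neg_neg]
    ring
  simp only [fourierCoeff, fourier_eq_ec_zpow, smul_eq_mul]
  calc ∫ x, ec x ^ (-n) * (convAverage ν ζ g x : ℂ) ∂haarAddCircle
      = ∫ x, ∫ θ, ec x ^ (-n) * (g (x + ζ + θ) : ℂ) ∂ν ∂haarAddCircle := by
        simp only [convAverage, ← integral_complex_ofReal, integral_const_mul]
    _ = ∫ θ, ∫ x, ec x ^ (-n) * (g (x + ζ + θ) : ℂ) ∂haarAddCircle ∂ν :=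
        integral_integral_swap (integrable_of_continuous
          ((hcont.comp continuous_fst).mul (by fun_prop)))
    _ = _ := by simp only [hrot, integral_mul_const]

lemma integral_convAverage :
    ∫ x, convAverage ν ζ g x ∂haarAddCircle = ∫ y, g y ∂haarAddCircle := by
  have h := fourierCoeff_convAverage ν ζ hg 0
  simp only [fourierCoeff_zero_ofReal, zpow_zero, integral_const, probReal_univ, one_smul,
    one_mul] at h
  exact_mod_cast h

lemma integral_convAverage_sq_le {q : ℝ} (hq : ∀ n : ℤ, n ≠ 0 → ‖∫ y, ec y ^ n ∂ν‖ ≤ q) :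
    ∫ x, convAverage ν ζ g x ^ 2 ∂haarAddCircle ≤
      q ^ 2 * ∫ y, g y ^ 2 ∂haarAddCircle + (1 - q ^ 2) * (∫ y, g y ∂haarAddCircle) ^ 2 := by
  refine hasSum_le (fun n ↦ ?_) (hasSum_sq_norm_fourierCoeff (continuous_convAverage ν ζ hg))
    (((hasSum_sq_norm_fourierCoeff hg).mul_left (q ^ 2)).add
      (hasSum_ite_eq 0 ((1 - q ^ 2) * (∫ y, g y ∂haarAddCircle) ^ 2)))
  split_ifs with hn
  · rw [hn, fourierCoeff_zero_ofReal, fourierCoeff_zero_ofReal, integral_convAverage ν ζ hg,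
      norm_real, Real.norm_eq_abs, sq_abs]
    exact le_of_eq (by ring)
  · rw [fourierCoeff_convAverage ν ζ hg, norm_mul, norm_mul, norm_zpow, norm_ec, one_zpow, one_mul,
      mul_pow, add_zero]
    gcongr
    exact hq n hn

end ConvAverage

/-- The weighted composition operator of `phaseMap r`, normalized to be an isometry of
`L²(haarAddCircle)`. -/
def koopman (r : ℝ) (f : Torus → ℝ) (y : Torus) : ℝ := phaseWeight r y * f (phaseMap r y)

section Koopman

variable {r : ℝ} (hr : |r| < 1)
include hr

lemma continuous_koopman {f : Torus → ℝ} (hf : Continuous f) : Continuous (koopman r f) :=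
  (continuous_phaseWeight hr).mul (hf.comp (continuous_phaseMap hr))

lemma integral_koopman_sq {f : Torus → ℝ} (hf : Continuous f) :
    ∫ y, koopman r f y ^ 2 ∂haarAddCircle = ∫ y, f y ^ 2 ∂haarAddCircle := by
  simp only [koopman, mul_pow]
  exact integral_phaseWeight_sq_mul_comp_phaseMap hr (f := fun y ↦ f y ^ 2) (by fun_prop)

lemma integral_phaseWeight_sq : ∫ y, phaseWeight r y ^ 2 ∂haarAddCircle = 1 := by
  simpa using integral_phaseWeight_sq_mul_comp_phaseMap hr (continuous_const (y := (1 : ℝ)))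

lemma integral_phaseWeight_pos : 0 < ∫ y, phaseWeight r y ∂haarAddCircle :=
  (continuous_phaseWeight hr).integral_pos_of_hasCompactSupport_nonneg_nonzero
    (HasCompactSupport.of_compactSpace _) (fun y ↦ (phaseWeight_pos hr y).le)
    (phaseWeight_pos hr 0).ne'

lemma phaseWeight_zero_ne_one (hr0 : r ≠ 0) : phaseWeight r 0 ≠ 1 := by
  have hlt := abs_lt.1 hr
  have hden : ‖(1 : ℂ) - r * ec 0‖ = 1 - r := by
    rw [ec_zero, mul_one, ← ofReal_one, ← ofReal_sub, norm_real, Real.norm_eq_abs,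
      abs_of_pos (by linarith)]
  rw [phaseWeight, hden, Ne, div_eq_one_iff_eq (by linarith)]
  intro h
  have hsq : 1 - r ^ 2 = (1 - r) ^ 2 := by rw [← h, Real.sq_sqrt (one_sub_sq_pos hr).le]
  have : r * (1 - r) = 0 := by linear_combination hsq / 2
  rcases mul_eq_zero.1 this with h0 | h1
  · exact hr0 h0
  · linarith

lemma integral_phaseWeight_lt_one (hr0 : r ≠ 0) :
    ∫ y, phaseWeight r y ∂haarAddCircle < 1 := by
  have hw := continuous_phaseWeight hr
  have hpos : 0 < ∫ y, (phaseWeight r y - 1) ^ 2 ∂haarAddCircle :=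
    Continuous.integral_pos_of_hasCompactSupport_nonneg_nonzero (x := 0) (by fun_prop)
      (HasCompactSupport.of_compactSpace _) (fun y ↦ sq_nonneg _)
      (pow_ne_zero 2 (sub_ne_zero.2 (phaseWeight_zero_ne_one hr hr0)))
  rw [integral_sub_const_sq hw, integral_phaseWeight_sq hr] at hpos
  linarith

/-- With `w = phaseWeight r` and `κ = ∫ w`, the isometry `koopman r` maps mean-zero functions into
the orthogonal complement of `w`, so `1` may be replaced by `1 - κ w` in `∫ koopman r u`. -/
lemma sq_integral_koopman_le_of_integral_eq_zero {u : Torus → ℝ} (hu : Continuous u)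
    (hmean : ∫ y, u y ∂haarAddCircle = 0) :
    (∫ y, koopman r u y ∂haarAddCircle) ^ 2 ≤
      (1 - (∫ y, phaseWeight r y ∂haarAddCircle) ^ 2) * ∫ y, u y ^ 2 ∂haarAddCircle := by
  have hw := continuous_phaseWeight hr
  have hku := continuous_koopman hr hu
  set κ := ∫ y, phaseWeight r y ∂haarAddCircle with hκ
  have horth : ∫ y, phaseWeight r y * koopman r u y ∂haarAddCircle = 0 := by
    simpa only [koopman, ← mul_assoc, ← pow_two, hmean]
      using integral_phaseWeight_sq_mul_comp_phaseMap hr hu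
  have hreplace : ∫ y, (1 - κ * phaseWeight r y) * koopman r u y ∂haarAddCircle =
      ∫ y, koopman r u y ∂haarAddCircle := by
    simp only [sub_mul, one_mul, mul_assoc]
    rw [integral_sub (integrable_of_continuous hku) (integrable_of_continuous (by fun_prop)),
      integral_const_mul, horth, mul_zero, sub_zero]
  have hnorm : ∫ y, (1 - κ * phaseWeight r y) ^ 2 ∂haarAddCircle = 1 - κ ^ 2 := by
    simp only [sub_sq_comm (1 : ℝ), integral_sub_const_sq (hw.const_mul κ), mul_pow,
      integral_const_mul, integral_phaseWeight_sq hr, ← hκ]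
    ring
  calc (∫ y, koopman r u y ∂haarAddCircle) ^ 2
      ≤ (∫ y, (1 - κ * phaseWeight r y) ^ 2 ∂haarAddCircle) *
          ∫ y, koopman r u y ^ 2 ∂haarAddCircle := by
        rw [← hreplace]
        exact sq_integral_mul_le (by fun_prop) hku
    _ = _ := by rw [hnorm, integral_koopman_sq hr hu]

end Koopman

lemma sq_mul_add_le {κ s A B D : ℝ} (hs : 0 < s) (hD : D ^ 2 ≤ s * B) :
    (κ * A + D) ^ 2 ≤ (κ ^ 2 + s) * (A ^ 2 + B) := by
  have hB : D ^ 2 / s ≤ B := (div_le_iff₀' hs).2 hD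
  calc (κ * A + D) ^ 2 = (κ ^ 2 + s) * (A ^ 2 + D ^ 2 / s) - (s * A - κ * D) ^ 2 / s := by
        field_simp
        ring
    _ ≤ (κ ^ 2 + s) * (A ^ 2 + D ^ 2 / s) := sub_le_self _ (by positivity)
    _ ≤ _ := by gcongr

section Decay

variable {r q : ℝ} (hr : |r| < 1) (ν : Measure Torus) [IsProbabilityMeasure ν] (ζ : Torus)
include hr

lemma sq_integral_koopman_convAverage_le (hr0 : r ≠ 0) (hq0 : 0 < q)
    (hq : ∀ n : ℤ, n ≠ 0 → ‖∫ y, ec y ^ n ∂ν‖ ≤ q) {g : Torus → ℝ} (hg : Continuous g) :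
    (∫ y, koopman r (convAverage ν ζ g) y ∂haarAddCircle) ^ 2 ≤
      (1 - (1 - q ^ 2) * (1 - (∫ y, phaseWeight r y ∂haarAddCircle) ^ 2)) *
        ∫ y, g y ^ 2 ∂haarAddCircle := by
  have hw := continuous_phaseWeight hr
  have hf := continuous_convAverage ν ζ hg
  set f := convAverage ν ζ g
  set κ := ∫ y, phaseWeight r y ∂haarAddCircle with hκ
  set A := ∫ y, g y ∂haarAddCircle
  set V := ∫ y, g y ^ 2 ∂haarAddCircle
  have hfA : ∫ y, f y ∂haarAddCircle = A := integral_convAverage ν ζ hg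
  have hu : Continuous fun y ↦ f y - A := by fun_prop
  have hκ1 : 0 < 1 - κ ^ 2 := by
    nlinarith [integral_phaseWeight_pos hr, integral_phaseWeight_lt_one hr hr0]
  have hmean : ∫ y, (f y - A) ∂haarAddCircle = 0 := by
    rw [integral_sub (integrable_of_continuous hf) (integrable_const _), hfA, integral_const,
      probReal_univ, one_smul, sub_self]
  have hvar : ∫ y, (f y - A) ^ 2 ∂haarAddCircle ≤ q ^ 2 * (V - A ^ 2) := by
    rw [integral_sub_const_sq hf, hfA]
    linarith [integral_convAverage_sq_le ν ζ hg hq]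
  have hsplit : ∫ y, koopman r f y ∂haarAddCircle =
      κ * A + ∫ y, koopman r (fun y ↦ f y - A) y ∂haarAddCircle := by
    rw [hκ, ← integral_mul_const, ← integral_add (integrable_of_continuous (by fun_prop))
      (integrable_of_continuous (continuous_koopman hr hu))]
    simp only [koopman, ← mul_add, add_sub_cancel]
  calc (∫ y, koopman r f y ∂haarAddCircle) ^ 2
      ≤ (κ ^ 2 + (1 - κ ^ 2) * q ^ 2) * (A ^ 2 + (V - A ^ 2)) := by
        rw [hsplit]
        refine sq_mul_add_le (by positivity) ?_
        calc (∫ y, koopman r (fun y ↦ f y - A) y ∂haarAddCircle) ^ 2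
            ≤ (1 - κ ^ 2) * ∫ y, (f y - A) ^ 2 ∂haarAddCircle :=
              sq_integral_koopman_le_of_integral_eq_zero hr hu hmean
          _ ≤ (1 - κ ^ 2) * q ^ 2 * (V - A ^ 2) := by
              rw [mul_assoc]
              gcongr
    _ = _ := by ring

omit hr in
lemma mul_add_mul_sq_le_pow {Q m : ℝ} (hQ0 : 0 ≤ Q) (hQ1 : Q ≤ 1) (hm0 : 0 ≤ m) (hm1 : m ≤ 1)
    {A V : ℕ → ℝ} (hV : ∀ n, V (n + 1) ≤ Q * V n + (1 - Q) * A n ^ 2)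
    (hA : ∀ n, A (n + 1) ^ 2 ≤ m ^ 2 * V n) (n : ℕ) :
    m * V n + (1 - Q) * A n ^ 2 ≤ (Q + (1 - Q) * m) ^ n * (m * V 0 + (1 - Q) * A 0 ^ 2) := by
  have : 0 ≤ 1 - Q := sub_nonneg.2 hQ1
  induction n with
  | zero => simp
  | succ n ih =>
    have hm : m ≤ Q + (1 - Q) * m := by nlinarith [mul_nonneg hQ0 (sub_nonneg.2 hm1)]
    calc m * V (n + 1) + (1 - Q) * A (n + 1) ^ 2
        ≤ m * (Q * V n + (1 - Q) * A n ^ 2) + (1 - Q) * (m ^ 2 * V n) := by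
          gcongr
          exacts [hV n, hA n]
      _ = (Q + (1 - Q) * m) * (m * V n) + m * ((1 - Q) * A n ^ 2) := by ring
      _ ≤ (Q + (1 - Q) * m) * (m * V n) + (Q + (1 - Q) * m) * ((1 - Q) * A n ^ 2) := by gcongr
      _ = (Q + (1 - Q) * m) * (m * V n + (1 - Q) * A n ^ 2) := by ring
      _ ≤ (Q + (1 - Q) * m) * ((Q + (1 - Q) * m) ^ n * (m * V 0 + (1 - Q) * A 0 ^ 2)) := by gcongr
      _ = _ := by ring

/-- The iterates `1, T 1, T² 1, …` for `T g = convAverage ν ζ (koopman r g)`. -/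
def transferIter (r : ℝ) (ν : Measure Torus) (ζ : Torus) : ℕ → Torus → ℝ
  | 0 => 1
  | n + 1 => convAverage ν ζ (koopman r (transferIter r ν ζ n))

lemma continuous_transferIter (n : ℕ) : Continuous (transferIter r ν ζ n) := by
  induction n with
  | zero => exact continuous_const
  | succ n ih => exact continuous_convAverage ν ζ (continuous_koopman hr ih)

omit [IsProbabilityMeasure ν] in
lemma transferIter_nonneg (n : ℕ) (x : Torus) : 0 ≤ transferIter r ν ζ n x := by
  induction n generalizing x with
  | zero => exact zero_le_one
  | succ n ih => exact integral_nonneg fun θ ↦ mul_nonneg (phaseWeight_pos hr _).le (ih _)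

lemma mul_sq_integral_koopman_transferIter_le (hr0 : r ≠ 0) (hq0 : 0 < q) (hq1 : q ≤ 1)
    (hq : ∀ n : ℤ, n ≠ 0 → ‖∫ y, ec y ^ n ∂ν‖ ≤ q) {m : ℝ} (hm0 : 0 ≤ m) (hm1 : m ≤ 1)
    (hm : 1 - (1 - q ^ 2) * (1 - (∫ y, phaseWeight r y ∂haarAddCircle) ^ 2) = m ^ 2) (n : ℕ) :
    m * (∫ y, koopman r (transferIter r ν ζ n) y ∂haarAddCircle) ^ 2 ≤
      (q ^ 2 + (1 - q ^ 2) * m) ^ n * 2 := by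
  have hqq : q ^ 2 ≤ 1 := pow_le_one₀ hq0.le hq1
  have : 0 ≤ 1 - q ^ 2 := sub_nonneg.2 hqq
  have hcont (n : ℕ) := continuous_transferIter hr ν ζ n
  set A : ℕ → ℝ := fun n ↦ ∫ y, koopman r (transferIter r ν ζ n) y ∂haarAddCircle
  set V : ℕ → ℝ := fun n ↦ ∫ y, transferIter r ν ζ n y ^ 2 ∂haarAddCircle
  have hkoop (n : ℕ) : ∫ y, koopman r (transferIter r ν ζ n) y ^ 2 ∂haarAddCircle = V n :=
    integral_koopman_sq hr (hcont n)
  have hAV (n : ℕ) : A n ^ 2 ≤ V n :=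
    (sq_integral_le (continuous_koopman hr (hcont n))).trans_eq (hkoop n)
  have hV (n : ℕ) : V (n + 1) ≤ q ^ 2 * V n + (1 - q ^ 2) * A n ^ 2 := by
    rw [← hkoop n]
    exact integral_convAverage_sq_le ν ζ (continuous_koopman hr (hcont n)) hq
  have hA (n : ℕ) : A (n + 1) ^ 2 ≤ m ^ 2 * V n := by
    rw [← hkoop n, ← hm]
    exact sq_integral_koopman_convAverage_le hr ν ζ hr0 hq0 hq (continuous_koopman hr (hcont n))
  have hV0 : V 0 = 1 := by simp [V, transferIter]
  calc m * A n ^ 2 ≤ m * V n := by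
        gcongr
        exact hAV n
    _ ≤ m * V n + (1 - q ^ 2) * A n ^ 2 := le_add_of_nonneg_right (by positivity)
    _ ≤ (q ^ 2 + (1 - q ^ 2) * m) ^ n * (m * V 0 + (1 - q ^ 2) * A 0 ^ 2) :=
        mul_add_mul_sq_le_pow (sq_nonneg q) hqq hm0 hm1 hV hA n
    _ ≤ (q ^ 2 + (1 - q ^ 2) * m) ^ n * 2 := by
        gcongr
        nlinarith [hAV 0, sq_nonneg q]

theorem exists_integral_koopman_transferIter_le (hr0 : r ≠ 0) (hq0 : 0 < q) (hq1 : q < 1)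
    (hq : ∀ n : ℤ, n ≠ 0 → ‖∫ y, ec y ^ n ∂ν‖ ≤ q) :
    ∃ σ C : ℝ≥0, 0 < σ ∧ σ < 1 ∧ ∀ ζ n,
      ∫ y, koopman r (transferIter r ν ζ n) y ∂haarAddCircle ≤ C * σ ^ n := by
  set κ := ∫ y, phaseWeight r y ∂haarAddCircle
  have hqq : 0 < 1 - q ^ 2 := by nlinarith
  have hκ : 0 < 1 - κ ^ 2 := by
    nlinarith [integral_phaseWeight_pos hr, integral_phaseWeight_lt_one hr hr0]
  have hM0 : 0 < 1 - (1 - q ^ 2) * (1 - κ ^ 2) := by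
    nlinarith [mul_pos (pow_pos hq0 2) hκ, sq_nonneg κ]
  set m := √(1 - (1 - q ^ 2) * (1 - κ ^ 2))
  have hm0 : 0 < m := Real.sqrt_pos.2 hM0
  have hm1 : m < 1 := (Real.sqrt_lt' one_pos).2 (by nlinarith [mul_pos hqq hκ])
  set τ := q ^ 2 + (1 - q ^ 2) * m
  have hτ0 : 0 < τ := by positivity
  have hτ1 : τ < 1 := by nlinarith
  refine ⟨.mk √τ (Real.sqrt_nonneg _), .mk √(2 / m) (Real.sqrt_nonneg _), Real.sqrt_pos.2 hτ0,
    (Real.sqrt_lt' one_pos).2 (by rwa [one_pow]), fun ζ n ↦ ?_⟩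
  rw [NNReal.coe_mk, NNReal.coe_mk]
  refine (le_abs_self _).trans (abs_le_of_sq_le_sq ?_ (by positivity))
  calc (∫ y, koopman r (transferIter r ν ζ n) y ∂haarAddCircle) ^ 2 ≤ τ ^ n * 2 / m :=
        (le_div_iff₀' hm0).2 (mul_sq_integral_koopman_transferIter_le hr ν ζ hr0 hq0 hq1.le hq
          hm0.le hm1.le (Real.sq_sqrt hM0.le).symm n)
    _ = (√(2 / m) * √τ ^ n) ^ 2 := by
        rw [mul_pow, Real.sq_sqrt (by positivity), pow_right_comm, Real.sq_sqrt hτ0.le]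
        ring

end Decay

end Contraction

section InfiniteProduct

variable {X : ℕ → Type*} [∀ n, MeasurableSpace (X n)] (μ : ∀ n, Measure (X n))
  [∀ n, IsProbabilityMeasure (μ n)]

lemma measurable_natCases : Measurable
    fun p : X 0 × (∀ n, X (n + 1)) ↦ (fun n ↦ Nat.casesOn n p.1 p.2 : ∀ n, X n) := by
  refine measurable_pi_iff.2 fun n ↦ ?_
  cases n with
  | zero => exact measurable_fst
  | succ n => exact (measurable_pi_apply n).comp measurable_snd

lemma map_natCases_prod_infinitePi :
    ((μ 0).prod (Measure.infinitePi fun n ↦ μ (n + 1))).map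
      (fun p ↦ (fun n ↦ Nat.casesOn n p.1 p.2 : ∀ n, X n)) = Measure.infinitePi μ := by
  refine Measure.eq_infinitePi μ fun s t ht ↦ ?_
  have hinj : Set.InjOn Nat.succ (Nat.succ ⁻¹' s) := Nat.succ_injective.injOn
  have hpre : (fun p : X 0 × (∀ n, X (n + 1)) ↦ (fun n ↦ Nat.casesOn n p.1 p.2 : ∀ n, X n)) ⁻¹'
      (s : Set ℕ).pi t = (if 0 ∈ s then t 0 else Set.univ) ×ˢ
        (s.preimage Nat.succ hinj : Set ℕ).pi fun n ↦ t (n + 1) := by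
    ext p
    rw [Set.mem_preimage, Set.mem_pi, ← Nat.and_forall_add_one]
    by_cases h : 0 ∈ s <;> simp [Set.mem_pi, h]
  rw [Measure.map_apply measurable_natCases (.pi s.countable_toSet fun i _ ↦ ht i), hpre,
    Measure.prod_prod, Measure.infinitePi_pi _ fun i _ ↦ ht (i + 1)]
  have hs : s.erase 0 = (s.preimage Nat.succ hinj).image Nat.succ := by
    ext (_ | n) <;> simp
  have hprod : ∏ i ∈ s.erase 0, μ i (t i) =
      ∏ i ∈ s.preimage Nat.succ hinj, μ (i + 1) (t (i + 1)) := by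
    rw [hs, Finset.prod_image Nat.succ_injective.injOn]
  rw [← hprod]
  split_ifs with h
  · exact Finset.mul_prod_erase s (fun i ↦ μ i (t i)) h
  · rw [measure_univ, one_mul, Finset.erase_eq_of_notMem h]

lemma lintegral_infinitePi_nat {F : (∀ n, X n) → ℝ≥0∞} (hF : Measurable F) :
    ∫⁻ ω, F ω ∂Measure.infinitePi μ =
      ∫⁻ x, ∫⁻ ω, F (fun n ↦ Nat.casesOn n x ω) ∂(Measure.infinitePi fun n ↦ μ (n + 1)) ∂μ 0 := by
  rw [← map_natCases_prod_infinitePi, lintegral_map hF measurable_natCases]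
  exact lintegral_prod _ (hF.comp measurable_natCases).aemeasurable

end InfiniteProduct

section TransferOperators

/-- One step of the Prüfer phase `x`, started with a random phase `θ` of law `ν` restricted to `G`
and weighted by the `e`-th power of `phaseWeight`. -/
def phaseStep (r : ℝ) (ν : Measure Torus) (ζ : Torus) (G : Set Torus) (e : ℕ)
    (f : Torus → ℝ≥0∞) (x : Torus) : ℝ≥0∞ :=
  ∫⁻ θ in G, ENNReal.ofReal (phaseWeight r (x + ζ + θ) ^ e) * f (phaseMap r (x + ζ + θ)) ∂ν

/-- The composition of the `phaseStep`s with parameters `(G 0, e 0), …, (G (n - 1), e (n - 1))`. -/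
def phaseSteps (r : ℝ) (ν : Measure Torus) (ζ : Torus) :
    (ℕ → Set Torus) → (ℕ → ℕ) → ℕ → (Torus → ℝ≥0∞) → Torus → ℝ≥0∞
  | _, _, 0, f => f
  | G, e, n + 1, f =>
    phaseStep r ν ζ (G 0) (e 0) (phaseSteps r ν ζ (fun i ↦ G (i + 1)) (fun i ↦ e (i + 1)) n f)

/-- The weight of a path `ω` whose `i`-th phase is restricted to `G i` and whose `i`-th
`phaseWeight` is taken to the power `e i`, for `i < n`. -/
def pathWeight (r : ℝ) (ζ x : Torus) (G : ℕ → Set Torus) (e : ℕ → ℕ) (n : ℕ) (ω : ℕ → Torus) :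
    ℝ≥0∞ :=
  ∏ i ∈ Finset.range n, (G i).indicator
    (fun θ ↦ ENNReal.ofReal (phaseWeight r (pruferPhase r ζ x ω i + ζ + θ) ^ e i)) (ω i)

lemma phaseSteps_add (r : ℝ) (ν : Measure Torus) (ζ : Torus) (G : ℕ → Set Torus) (e : ℕ → ℕ)
    (m n : ℕ) (f : Torus → ℝ≥0∞) :
    phaseSteps r ν ζ G e (m + n) f =
      phaseSteps r ν ζ G e m (phaseSteps r ν ζ (fun i ↦ G (m + i)) (fun i ↦ e (m + i)) n f) := by
  induction m generalizing G e with
  | zero => simp [phaseSteps]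
  | succ m ih =>
    rw [Nat.add_right_comm, phaseSteps, ih, phaseSteps]
    simp only [Nat.add_right_comm]

lemma phaseSteps_eq_iterate {r : ℝ} {ν : Measure Torus} {ζ : Torus} {G : ℕ → Set Torus} {e : ℕ → ℕ}
    {n : ℕ} {G₀ : Set Torus} {e₀ : ℕ} (hG : ∀ i < n, G i = G₀) (he : ∀ i < n, e i = e₀)
    (f : Torus → ℝ≥0∞) : phaseSteps r ν ζ G e n f = (phaseStep r ν ζ G₀ e₀)^[n] f := by
  induction n generalizing G e with
  | zero => rfl
  | succ n ih =>
    rw [phaseSteps, ih (fun i hi ↦ hG _ (Nat.succ_lt_succ hi))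
        fun i hi ↦ he _ (Nat.succ_lt_succ hi),
      hG 0 n.succ_pos, he 0 n.succ_pos, Function.iterate_succ_apply']

lemma pathWeight_succ (r : ℝ) (ζ x : Torus) (G : ℕ → Set Torus) (e : ℕ → ℕ) (n : ℕ) (θ : Torus)
    (ω : ℕ → Torus) :
    pathWeight r ζ x G e (n + 1) (fun i ↦ Nat.casesOn i θ ω) =
      (G 0).indicator (fun θ ↦ ENNReal.ofReal (phaseWeight r (x + ζ + θ) ^ e 0)) θ *
        pathWeight r ζ (phaseMap r (x + ζ + θ)) (fun i ↦ G (i + 1)) (fun i ↦ e (i + 1)) n ω := by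
  rw [pathWeight, Finset.prod_range_succ', mul_comm]
  simp only [pruferPhase_succ_eq_shift]
  rfl

variable {r : ℝ} (hr : |r| < 1)
include hr

lemma measurable_pathWeight {β : Type*} [MeasurableSpace β] {ζ x : β → Torus}
    {ω : β → ℕ → Torus} (hζ : Measurable ζ) (hx : Measurable x) (hω : Measurable ω)
    {G : ℕ → Set Torus} (hG : ∀ i, MeasurableSet (G i)) (e : ℕ → ℕ) (n : ℕ) :
    Measurable fun b ↦ pathWeight r (ζ b) (x b) G e n (ω b) := by
  refine Finset.measurable_fun_prod _ fun i _ ↦ ?_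
  have hphase : Measurable fun b ↦ pruferPhase r (ζ b) (x b) (ω b) i :=
    (continuous_pruferPhase hr i).measurable.comp (hζ.prodMk (hx.prodMk hω))
  have hωi : Measurable fun b ↦ ω b i := (measurable_pi_apply i).comp hω
  exact (((continuous_phaseWeight hr).measurable.comp ((hphase.add hζ).add hωi)).pow_const
    _).ennreal_ofReal.indicator (hωi (hG i))

lemma measurable_phaseStep (ν : Measure Torus) [SFinite ν] (ζ : Torus) (G : Set Torus) (e : ℕ)
    {f : Torus → ℝ≥0∞} (hf : Measurable f) : Measurable (phaseStep r ν ζ G e f) := by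
  have hweight := (continuous_phaseWeight hr).measurable
  have hmap := (continuous_phaseMap hr).measurable
  have : Measurable fun p : Torus × Torus ↦ ENNReal.ofReal (phaseWeight r (p.1 + ζ + p.2) ^ e) *
      f (phaseMap r (p.1 + ζ + p.2)) := by fun_prop
  exact this.lintegral_prod_right'

lemma lintegral_pathWeight (ν : Measure Torus) [IsProbabilityMeasure ν] (ζ : Torus)
    {G : ℕ → Set Torus} (hG : ∀ i, MeasurableSet (G i)) (e : ℕ → ℕ) (n : ℕ) (x : Torus) :
    ∫⁻ ω, pathWeight r ζ x G e n ω ∂(Measure.infinitePi fun _ ↦ ν) =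
      phaseSteps r ν ζ G e n 1 x := by
  induction n generalizing G e x with
  | zero => simp [pathWeight, phaseSteps]
  | succ n ih =>
    have hmeas {G : ℕ → Set Torus} (hG : ∀ i, MeasurableSet (G i)) (e : ℕ → ℕ) (n : ℕ)
        (x : Torus) : Measurable (pathWeight r ζ x G e n) :=
      measurable_pathWeight hr measurable_const measurable_const measurable_id hG e n
    rw [lintegral_infinitePi_nat _ (hmeas hG e (n + 1) x), phaseSteps, phaseStep,
      ← lintegral_indicator (hG 0)]
    refine lintegral_congr fun θ ↦ ?_
    rw [lintegral_congr (pathWeight_succ r ζ x G e n θ),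
      lintegral_const_mul _ (hmeas (fun i ↦ hG (i + 1)) _ _ _), ih fun i ↦ hG (i + 1),
      Set.indicator_mul_left]

lemma lintegral_phaseStep_two (ν : Measure Torus) [IsProbabilityMeasure ν] (ζ : Torus)
    {f : Torus → ℝ≥0∞} (hf : Measurable f) :
    ∫⁻ x, phaseStep r ν ζ Set.univ 2 f x ∂haarAddCircle = ∫⁻ x, f x ∂haarAddCircle := by
  have hweight := (continuous_phaseWeight hr).measurable
  have hmap := (continuous_phaseMap hr).measurable
  set g : Torus → ℝ≥0∞ := fun y ↦ ENNReal.ofReal (phaseWeight r y ^ 2) * f (phaseMap r y)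
  calc ∫⁻ x, phaseStep r ν ζ Set.univ 2 f x ∂haarAddCircle
      = ∫⁻ x, ∫⁻ θ, g (x + ζ + θ) ∂ν ∂haarAddCircle := by
        simp only [phaseStep, Measure.restrict_univ, g]
    _ = ∫⁻ θ, ∫⁻ x, g (x + ζ + θ) ∂haarAddCircle ∂ν := by
        refine lintegral_lintegral_swap (Measurable.aemeasurable ?_)
        fun_prop
    _ = ∫⁻ x, f x ∂haarAddCircle := by
        simp only [add_assoc, lintegral_add_right_eq_self g, g,
          lintegral_phaseWeight_sq_mul_comp_phaseMap hr hf, lintegral_const, measure_univ, mul_one]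

lemma lintegral_iterate_phaseStep_two (ν : Measure Torus) [IsProbabilityMeasure ν] (ζ : Torus)
    (n : ℕ) : Measurable ((phaseStep r ν ζ Set.univ 2)^[n] 1) ∧
      ∫⁻ x, (phaseStep r ν ζ Set.univ 2)^[n] 1 x ∂haarAddCircle = 1 := by
  induction n with
  | zero => exact ⟨measurable_one, by simp⟩
  | succ n ih =>
    rw [Function.iterate_succ_apply']
    exact ⟨measurable_phaseStep hr ν ζ _ _ ih.1, (lintegral_phaseStep_two hr ν ζ ih.1).trans ih.2⟩

end TransferOperators

section MarkedPaths

/-- The constraint that only the `j`-th and `l`-th phases lie in `G`. -/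
def markedSet (G : Set Torus) (j l i : ℕ) : Set Torus := if i = j ∨ i = l then G else Set.univ

/-- The exponents for which the product of the `phaseWeight`s along a path of length `N` is
`‖φ_k‖ * ‖φ_N‖⁻²`. -/
def momentExponent (k i : ℕ) : ℕ := if i < k then 1 else 2

lemma measurableSet_markedSet {G : Set Torus} (hG : MeasurableSet G) (j l i : ℕ) :
    MeasurableSet (markedSet G j l i) := by
  rw [markedSet]
  split_ifs
  exacts [hG, .univ]

lemma phaseSteps_markedSet (r : ℝ) (ν : Measure Torus) (ζ : Torus) (G : Set Torus) (j a b d : ℕ) :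
    phaseSteps r ν ζ (markedSet G j (j + (1 + (a + b)))) (momentExponent (j + (1 + a)))
        (j + (1 + (a + (b + (1 + d))))) 1 =
      (phaseStep r ν ζ Set.univ 1)^[j] (phaseStep r ν ζ G 1 ((phaseStep r ν ζ Set.univ 1)^[a]
        ((phaseStep r ν ζ Set.univ 2)^[b] (phaseStep r ν ζ G 2
          ((phaseStep r ν ζ Set.univ 2)^[d] 1))))) := by
  simp only [phaseSteps_add]
  rw [phaseSteps_eq_iterate (n := j) (G₀ := Set.univ) (e₀ := 1),
    phaseSteps_eq_iterate (n := 1) (G₀ := G) (e₀ := 1),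
    phaseSteps_eq_iterate (n := a) (G₀ := Set.univ) (e₀ := 1),
    phaseSteps_eq_iterate (n := b) (G₀ := Set.univ) (e₀ := 2),
    phaseSteps_eq_iterate (n := 1) (G₀ := G) (e₀ := 2),
    phaseSteps_eq_iterate (n := d) (G₀ := Set.univ) (e₀ := 2), Function.iterate_one,
    Function.iterate_one]
  all_goals intros; grind [markedSet, momentExponent]

lemma prod_pow_momentExponent_mul_prod (s : ℕ → ℝ) {k N : ℕ} (hkN : k ≤ N) :
    (∏ i ∈ Finset.range N, s i ^ momentExponent k i) * ∏ i ∈ Finset.range k, s i =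
      (∏ i ∈ Finset.range N, s i) ^ 2 := by
  induction N, hkN using Nat.le_induction with
  | base =>
    rw [sq]
    congr 1
    refine Finset.prod_congr rfl fun i hi ↦ ?_
    rw [momentExponent, if_pos (Finset.mem_range.1 hi), pow_one]
  | succ N hkN ih =>
    rw [Finset.prod_range_succ, Finset.prod_range_succ _ N, mul_pow, ← ih, momentExponent,
      if_neg hkN.not_gt]
    ring

end MarkedPaths

section PhaseStepBounds

variable {r : ℝ} {ν : Measure Torus} {ζ : Torus} {G : Set Torus} {e : ℕ}

lemma monotone_phaseStep : Monotone (phaseStep r ν ζ G e) :=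
  fun _ _ hfg _ ↦ lintegral_mono fun _ ↦ mul_le_mul_right (hfg _) _

lemma phaseStep_le_of_restrict_le {c : ℝ≥0} (hle : ν.restrict G ≤ c • haarAddCircle)
    (f : Torus → ℝ≥0∞) (x : Torus) :
    phaseStep r ν ζ G e f x ≤
      c * ∫⁻ y, ENNReal.ofReal (phaseWeight r y ^ e) * f (phaseMap r y) ∂haarAddCircle := by
  refine (lintegral_mono' hle le_rfl).trans_eq ?_
  rw [lintegral_smul_measure, lintegral_add_left_eq_self
    (fun y ↦ ENNReal.ofReal (phaseWeight r y ^ e) * f (phaseMap r y)) (x + ζ), ENNReal.smul_def,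
    smul_eq_mul]

variable [IsProbabilityMeasure ν] (hr : |r| < 1)
include hr

lemma phaseStep_le {K : ℝ≥0} (hK : ∀ y, phaseWeight r y ≤ K) {f : Torus → ℝ≥0∞} {B : ℝ≥0∞}
    (hf : ∀ x, f x ≤ B) (x : Torus) : phaseStep r ν ζ G e f x ≤ (K : ℝ≥0∞) ^ e * B := by
  have hweight (y : Torus) : ENNReal.ofReal (phaseWeight r y ^ e) ≤ (K : ℝ≥0∞) ^ e := by
    rw [ENNReal.ofReal_pow (phaseWeight_pos hr y).le]
    gcongr
    exact ENNReal.ofReal_le_of_le_toReal (hK y)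
  calc phaseStep r ν ζ G e f x ≤ ∫⁻ _, (K : ℝ≥0∞) ^ e * B ∂ν :=
        (setLIntegral_le_lintegral _ _).trans
          (lintegral_mono fun θ ↦ mul_le_mul' (hweight _) (hf _))
    _ = (K : ℝ≥0∞) ^ e * B := by simp

lemma iterate_phaseStep_le {K : ℝ≥0} (hK : ∀ y, phaseWeight r y ≤ K) {f : Torus → ℝ≥0∞}
    {B : ℝ≥0∞} (hf : ∀ x, f x ≤ B) (n : ℕ) (x : Torus) :
    (phaseStep r ν ζ G e)^[n] f x ≤ ((K : ℝ≥0∞) ^ e) ^ n * B := by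
  induction n generalizing x with
  | zero => simpa using hf x
  | succ n ih =>
    rw [Function.iterate_succ_apply', pow_succ', mul_assoc]
    exact phaseStep_le hr hK ih x

omit [IsProbabilityMeasure ν] in
lemma lintegral_phaseWeight_mul_const {μ : Measure Torus} [IsFiniteMeasure μ]
    {f : Torus → ℝ} (hf : Continuous f) (hf0 : ∀ x, 0 ≤ f x) (x : Torus) (B : ℝ≥0∞) :
    ∫⁻ θ, ENNReal.ofReal (phaseWeight r (x + θ) ^ 1) *
        (ENNReal.ofReal (f (phaseMap r (x + θ))) * B) ∂μ =
      ENNReal.ofReal (∫ θ, koopman r f (x + θ) ∂μ) * B := by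
  have hcont : Continuous fun θ ↦ koopman r f (x + θ) :=
    (continuous_koopman hr hf).comp (continuous_const_add x)
  rw [ofReal_integral_eq_lintegral_ofReal (integrable_of_continuous hcont)
      (.of_forall fun θ ↦ mul_nonneg (phaseWeight_pos hr _).le (hf0 _)),
    ← lintegral_mul_const _ hcont.measurable.ennreal_ofReal]
  refine lintegral_congr fun θ ↦ ?_
  rw [koopman, ENNReal.ofReal_mul (phaseWeight_pos hr _).le, pow_one, mul_assoc]

lemma iterate_phaseStep_one_const (B : ℝ≥0∞) (n : ℕ) (x : Torus) :
    (phaseStep r ν ζ Set.univ 1)^[n] (fun _ ↦ B) x =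
      ENNReal.ofReal (transferIter r ν ζ n x) * B := by
  induction n generalizing x with
  | zero => simp [transferIter]
  | succ n ih =>
    rw [Function.iterate_succ_apply', phaseStep, Measure.restrict_univ, transferIter, convAverage]
    simp only [ih]
    exact lintegral_phaseWeight_mul_const hr (continuous_transferIter hr ν ζ n)
      (transferIter_nonneg hr ν ζ n) (x + ζ) B

/-- Up to the first visit of `G` only the sup bound on `phaseWeight` is used, and likewise between
time `k` and the second visit. In between, the `transferIter` gain a power of the contraction, and
after the second visit the squared weights preserve Haar measure. -/
lemma phaseSteps_markedSet_le {c : ℝ≥0} (hle : ν.restrict G ≤ c • haarAddCircle) {K : ℝ≥0}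
    (hK : ∀ y, phaseWeight r y ≤ K) (j a b d : ℕ) (x : Torus) :
    phaseSteps r ν ζ (markedSet G j (j + (1 + (a + b)))) (momentExponent (j + (1 + a)))
        (j + (1 + (a + (b + (1 + d))))) 1 x ≤
      (K : ℝ≥0∞) ^ j *
        (c * (ENNReal.ofReal (∫ y, koopman r (transferIter r ν ζ a) y ∂haarAddCircle) *
          (((K : ℝ≥0∞) ^ 2) ^ b * c))) := by
  rw [phaseSteps_markedSet]
  obtain ⟨hmeas, hint⟩ := lintegral_iterate_phaseStep_two hr ν ζ d
  set f := (phaseStep r ν ζ Set.univ 2)^[d] 1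
  have hd (x : Torus) : phaseStep r ν ζ G 2 f x ≤ c :=
    (phaseStep_le_of_restrict_le hle f x).trans_eq
      (by rw [lintegral_phaseWeight_sq_mul_comp_phaseMap hr hmeas, hint, mul_one])
  have hb := iterate_phaseStep_le (G := Set.univ) (e := 2) (ν := ν) (ζ := ζ) hr hK hd b
  set B := ((K : ℝ≥0∞) ^ 2) ^ b * c
  have ha (x : Torus) := (monotone_phaseStep.iterate a (hb : _ ≤ fun _ ↦ B) x).trans_eq
    (iterate_phaseStep_one_const (ν := ν) (ζ := ζ) hr B a x)
  have hj (x : Torus) : phaseStep r ν ζ G 1 ((phaseStep r ν ζ Set.univ 1)^[a]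
      ((phaseStep r ν ζ Set.univ 2)^[b] (phaseStep r ν ζ G 2 f))) x ≤
      c * (ENNReal.ofReal (∫ y, koopman r (transferIter r ν ζ a) y ∂haarAddCircle) * B) := by
    refine (monotone_phaseStep ha x).trans ((phaseStep_le_of_restrict_le hle _ x).trans_eq ?_)
    simpa only [zero_add] using congrArg ((c : ℝ≥0∞) * ·) (lintegral_phaseWeight_mul_const hr
      (μ := haarAddCircle) (continuous_transferIter hr ν ζ a) (transferIter_nonneg hr ν ζ a) 0 B)
  simpa only [pow_one] using
    iterate_phaseStep_le (G := Set.univ) (e := 1) (ν := ν) (ζ := ζ) hr hK hj j x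

end PhaseStepBounds

section WeakLimits

variable {X ι : Type*} [TopologicalSpace X] [CompactSpace X] [MeasurableSpace X]
  [OpensMeasurableSpace X] {L : Filter ι} {m : ι → ProbabilityMeasure X} {μ : ProbabilityMeasure X}

lemma tendsto_integral_of_tendsto_probabilityMeasure {𝕜 : Type*} [RCLike 𝕜]
    (hm : Tendsto m L (𝓝 μ)) {f : X → 𝕜} (hf : Continuous f) :
    Tendsto (fun i ↦ ∫ x, f x ∂(m i : Measure X)) L (𝓝 (∫ x, f x ∂(μ : Measure X))) :=
  (ProbabilityMeasure.tendsto_iff_forall_integral_rclike_tendsto 𝕜).1 hm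
    (BoundedContinuousFunction.mkOfCompact ⟨f, hf⟩)

lemma summable_integral_norm_of_tendsto [L.NeBot] (hm : Tendsto m L (𝓝 μ)) {g : ℕ → X → ℂ}
    (hg : ∀ k, Continuous (g k)) {S : ι → Finset ℕ} (hS : ∀ᶠ k in atTop, ∀ᶠ i in L, k ∈ S i)
    {B : ℝ≥0} (hB : ∀ᶠ i in L, ∑ k ∈ S i, ∫⁻ x, ‖g k x‖ₑ ∂(m i : Measure X) ≤ B) :
    Summable fun k ↦ ∫ x, ‖g k x‖ ∂(μ : Measure X) := by
  obtain ⟨k₀, hk₀⟩ := eventually_atTop.1 hS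
  rw [← summable_nat_add_iff k₀]
  refine summable_of_sum_le (c := B) (fun k ↦ integral_nonneg fun x ↦ norm_nonneg _) fun u ↦ ?_
  refine (Finset.sum_map u (addRightEmbedding k₀)
    fun k ↦ ∫ x, ‖g k x‖ ∂(μ : Measure X)).symm.trans_le ?_
  set v := u.map (addRightEmbedding k₀)
  have hv : ∀ᶠ i in L, v ⊆ S i := by
    refine (v.eventually_all.2 fun k hk ↦ hk₀ k ?_).mono fun i hi k hk ↦ hi k hk
    obtain ⟨n, -, rfl⟩ := Finset.mem_map.1 hk
    exact Nat.le_add_left k₀ n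
  refine le_of_tendsto (tendsto_finsetSum v fun k _ ↦
    tendsto_integral_of_tendsto_probabilityMeasure hm (hg k).norm) ?_
  filter_upwards [hv, hB] with i hvi hBi
  have hint (k : ℕ) : ENNReal.ofReal (∫ x, ‖g k x‖ ∂(m i : Measure X)) =
      ∫⁻ x, ‖g k x‖ₑ ∂(m i : Measure X) :=
    ofReal_integral_norm_eq_lintegral_enorm (integrable_of_continuous (hg k))
  refine (ENNReal.ofReal_le_ofReal_iff B.2).1 ?_
  rw [ENNReal.ofReal_sum_of_nonneg fun k _ ↦ integral_nonneg fun x ↦ norm_nonneg _]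
  simp only [hint]
  exact ((Finset.sum_le_sum_of_subset hvi).trans hBi).trans_eq ENNReal.ofReal_coe_nnreal.symm

/-- A weak limit of the Bernstein–Szegő measures is an orthogonality measure. -/
lemma exists_orthonormal_summable_integral_norm_cmvFun {α : ℕ → ℂ} (hα : ∀ n, ‖α n‖ < 1)
    {S : ℕ → Finset ℕ} (hS : ∀ᶠ k in atTop, ∀ᶠ N in atTop, k ∈ S N) {B : ℝ≥0}
    (hB : ∃ᶠ N in atTop, ∑ k ∈ S N, ∫⁻ ζ, ‖cmvFun α k ζ‖ₑ ∂bernsteinSzego α N ≤ B) :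
    ∃ μ : Measure Torus, IsFiniteMeasure μ ∧
      (∀ j k, ∫ ζ, conj (cmvFun α j ζ) * cmvFun α k ζ ∂μ = if j = k then 1 else 0) ∧
      Summable fun k ↦ ∫ ζ, ‖cmvFun α k ζ‖ ∂μ := by
  set E := {N | ∑ k ∈ S N, ∫⁻ ζ, ‖cmvFun α k ζ‖ₑ ∂bernsteinSzego α N ≤ B}
  have : (atTop ⊓ 𝓟 E).NeBot := frequently_mem_iff_neBot.1 hB
  set U := Ultrafilter.of (atTop ⊓ 𝓟 E)
  obtain ⟨hU, hUE⟩ := le_inf_iff.1 (Ultrafilter.of_le (atTop ⊓ 𝓟 E))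
  let m (N : ℕ) : ProbabilityMeasure Torus := ⟨_, isProbabilityMeasure_bernsteinSzego hα N⟩
  have hm : Tendsto m U (𝓝 (U.map m).lim) := (U.map m).le_nhds_lim
  refine ⟨(U.map m).lim, inferInstance, fun j k ↦ ?_,
    summable_integral_norm_of_tendsto hm (continuous_cmvFun α)
      (hS.mono fun k hk ↦ hU hk) (le_principal_iff.1 hUE)⟩
  refine tendsto_nhds_unique (tendsto_integral_of_tendsto_probabilityMeasure hm
    (by fun_prop)) (tendsto_const_nhds.congr' ?_)
  filter_upwards [hU (eventually_ge_atTop (max j k))] with N hN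
  exact (integral_conj_cmvFun_mul_bernsteinSzego hα N (le_of_max_le_left hN)
    (le_of_max_le_right hN)).symm

end WeakLimits

section MarkedMoments

/-- The first moment `∫ |χ_k| dμ_N` of the `k`-th basis function against the `N`-th Bernstein–Szegő
measure, for the phases `ω` and restricted to the event that `ω j` and `ω l` lie in `G`. -/
def markedMoment (r : ℝ) (G : Set Torus) (j k l N : ℕ) (ω : ℕ → Torus) : ℝ≥0∞ :=
  ∫⁻ ζ, pathWeight r ζ 0 (markedSet G j l) (momentExponent k) N ω ∂haarAddCircle

variable {r : ℝ} (hr : |r| < 1) {G : Set Torus} {j k l N : ℕ}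
include hr

lemma pathWeight_markedSet (ζ : Torus) (hkN : k ≤ N) {ω : ℕ → Torus} (hj : ω j ∈ G)
    (hl : ω l ∈ G) {α : ℕ → ℂ} (hα : α = phaseCoeff r fun m ↦ ∑ i ∈ Finset.range (m + 1), ω i) :
    pathWeight r ζ 0 (markedSet G j l) (momentExponent k) N ω =
      ENNReal.ofReal ((‖orthoFun α N ζ‖ ^ 2)⁻¹) * ‖cmvFun α k ζ‖ₑ := by
  set s : ℕ → ℝ := fun i ↦ phaseWeight r (pruferPhase r ζ 0 ω i + ζ + ω i)
  have hprod (n : ℕ) : ‖orthoFun α n ζ‖⁻¹ = ∏ i ∈ Finset.range n, s i := by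
    rw [hα]
    exact inv_norm_orthoFun_eq_prod hr ζ ω n
  have hφ : ‖orthoFun α k ζ‖ ≠ 0 := by
    rw [hα]
    exact norm_ne_zero_iff.2 (orthoFun_ne_zero (norm_phaseCoeff_lt_one hr _) k ζ)
  have hmem (i : ℕ) : ω i ∈ markedSet G j l i := by
    rw [markedSet]
    split_ifs with h
    exacts [h.elim (· ▸ hj) (· ▸ hl), trivial]
  simp only [pathWeight, Set.indicator_of_mem (hmem _)]
  rw [← ENNReal.ofReal_prod_of_nonneg fun i _ ↦ pow_nonneg (phaseWeight_pos hr _).le _,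
    ← ofReal_norm, norm_cmvFun, ← ENNReal.ofReal_mul (by positivity), ← inv_pow, hprod N,
    ← prod_pow_momentExponent_mul_prod s hkN, ← hprod k, inv_mul_cancel_right₀ hφ]

lemma markedMoment_eq (hkN : k ≤ N) {ω : ℕ → Torus} (hj : ω j ∈ G) (hl : ω l ∈ G) {α : ℕ → ℂ}
    (hα : α = phaseCoeff r fun m ↦ ∑ i ∈ Finset.range (m + 1), ω i) :
    markedMoment r G j k l N ω = ∫⁻ ζ, ‖cmvFun α k ζ‖ₑ ∂bernsteinSzego α N := by
  have hα_lt (n : ℕ) : ‖α n‖ < 1 := hα ▸ norm_phaseCoeff_lt_one hr _ n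
  rw [bernsteinSzego, lintegral_withDensity_eq_lintegral_mul _
    (continuous_inv_norm_orthoFun_sq hα_lt N).measurable.ennreal_ofReal
    (continuous_cmvFun α k).enorm.measurable]
  exact lintegral_congr fun ζ ↦ pathWeight_markedSet hr ζ hkN hj hl hα

lemma measurable_pathWeight_markedSet (hG : MeasurableSet G) :
    Measurable fun p : (ℕ → Torus) × Torus ↦
      pathWeight r p.2 0 (markedSet G j l) (momentExponent k) N p.1 :=
  measurable_pathWeight hr measurable_snd measurable_const measurable_fst
    (measurableSet_markedSet hG j l) _ N

lemma measurable_markedMoment (hG : MeasurableSet G) : Measurable (markedMoment r G j k l N) :=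
  (measurable_pathWeight_markedSet hr hG).lintegral_prod_right'

lemma lintegral_markedMoment_le {ν : Measure Torus} [IsProbabilityMeasure ν]
    (hG : MeasurableSet G) {c : ℝ≥0} (hle : ν.restrict G ≤ c • haarAddCircle) {K : ℝ≥0}
    (hK : ∀ y, phaseWeight r y ≤ K) {σ C : ℝ≥0}
    (hσ : ∀ ζ n, ∫ y, koopman r (transferIter r ν ζ n) y ∂haarAddCircle ≤ C * σ ^ n)
    (hjk : j < k) (hkl : k ≤ l) (hlN : l < N) :
    ∫⁻ ω, markedMoment r G j k l N ω ∂(Measure.infinitePi fun _ ↦ ν) ≤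
      (K ^ j * (c * (C * σ ^ (k - (j + 1)) * ((K ^ 2) ^ (l - k) * c))) : ℝ≥0) := by
  simp only [markedMoment]
  rw [lintegral_lintegral_swap (measurable_pathWeight_markedSet hr hG).aemeasurable]
  simp only [lintegral_pathWeight hr ν _ (measurableSet_markedSet hG j l)]
  obtain ⟨a, rfl⟩ : ∃ a, k = j + (1 + a) := ⟨k - (j + 1), by lia⟩
  obtain ⟨b, rfl⟩ : ∃ b, l = j + (1 + (a + b)) := ⟨l - (j + (1 + a)), by lia⟩
  obtain ⟨d, rfl⟩ : ∃ d, N = j + (1 + (a + (b + (1 + d)))) :=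
    ⟨N - (j + (1 + (a + (b + 1)))), by lia⟩
  rw [show j + (1 + a) - (j + 1) = a by lia, show j + (1 + (a + b)) - (j + (1 + a)) = b by lia]
  calc _ ≤ ∫⁻ _, ((K ^ j * (c * (C * σ ^ a * ((K ^ 2) ^ b * c))) : ℝ≥0) : ℝ≥0∞) ∂haarAddCircle := by
        refine lintegral_mono fun ζ ↦ (phaseSteps_markedSet_le hr hle hK j a b d 0).trans ?_
        push_cast
        gcongr
        exact ENNReal.ofReal_le_of_le_toReal (by simpa using hσ ζ a)
    _ = _ := by simp

end MarkedMoments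

section WindowSums

lemma tsum_comp_nat_div (F : ℕ → ℝ≥0∞) (M : ℕ) [NeZero M] :
    ∑' k, F (k / M) = M * ∑' g, F g := by
  calc ∑' k, F (k / M) = ∑' p : ℕ × Fin M, F p.1 :=
        (Nat.divModEquiv M).tsum_eq fun p : ℕ × Fin M ↦ F p.1
    _ = M * ∑' g, F g := by
        rw [ENNReal.tsum_prod']
        simp [ENNReal.tsum_mul_left]

lemma tsum_natCast_mul_pow_ne_top {q : ℝ≥0} (hq : q < 1) :
    ∑' g : ℕ, ((g * q ^ g : ℝ≥0) : ℝ≥0∞) ≠ ⊤ := by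
  rw [ENNReal.tsum_coe_ne_top_iff_summable, ← NNReal.summable_coe]
  simpa using summable_pow_mul_geometric_of_norm_lt_one (r := (q : ℝ)) 1 (by simpa using hq)

lemma pow_sub_mul_pow_le {σ K : ℝ≥0} (hσ0 : 0 < σ) (hσ1 : σ ≤ 1) (hK : 1 ≤ K) {i k l M : ℕ}
    (hik : i ≤ k) (hl : l ≤ k / M) :
    σ ^ (k - i) * K ^ l ≤ (σ ^ i)⁻¹ * (σ ^ M * K) ^ (k / M) := by
  calc σ ^ (k - i) * K ^ l = (σ ^ i)⁻¹ * (σ ^ k * K ^ l) := by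
        rw [pow_sub₀ σ hσ0.ne' hik]
        ring
    _ ≤ (σ ^ i)⁻¹ * (σ ^ (M * (k / M)) * K ^ (k / M)) := by
        gcongr _ * (?_ * ?_)
        exacts [pow_le_pow_of_le_one zero_le hσ1 (Nat.mul_div_le k M), pow_le_pow_right₀ hK hl]
    _ = _ := by rw [mul_pow, pow_mul]

/-- The indices `k ∈ (j, N)` for which the window `[k, k + k / M)` lies below `N`. -/
def windowIndices (M j N : ℕ) : Finset ℕ := {k ∈ Finset.range N | j < k ∧ k + k / M ≤ N}

lemma eventually_mem_windowIndices (M j : ℕ) :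
    ∀ᶠ k in atTop, ∀ᶠ N in atTop, k ∈ windowIndices M j N := by
  filter_upwards [eventually_gt_atTop j] with k hk
  filter_upwards [eventually_gt_atTop (k + k / M)] with N hN
  simpa [windowIndices, hk, hN.le] using (Nat.le_add_right k _).trans_lt hN

/-- The sum of the first moments up to `N`, where the `k`-th one is counted once for each visit of
`G` by the phases in the window `[k, k + k / M)`. -/
def windowSum (r : ℝ) (G : Set Torus) (M j N : ℕ) (ω : ℕ → Torus) : ℝ≥0∞ :=
  ∑ k ∈ windowIndices M j N, ∑ l ∈ Finset.Ico k (k + k / M), markedMoment r G j k l N ω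

variable {r : ℝ} (hr : |r| < 1) {G : Set Torus} (hG : MeasurableSet G)
include hr hG

lemma measurable_windowSum (M j N : ℕ) : Measurable (windowSum r G M j N) :=
  Finset.measurable_fun_sum _ fun _ _ ↦ Finset.measurable_fun_sum _ fun _ _ ↦
    measurable_markedMoment hr hG

variable {ν : Measure Torus} [IsProbabilityMeasure ν] {c : ℝ≥0}
  (hle : ν.restrict G ≤ c • haarAddCircle) {K : ℝ≥0} (hK1 : 1 ≤ K)
  (hK : ∀ y, phaseWeight r y ≤ K) {σ C : ℝ≥0} (hσ0 : 0 < σ) (hσ1 : σ ≤ 1)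
  (hσ : ∀ ζ n, ∫ y, koopman r (transferIter r ν ζ n) y ∂haarAddCircle ≤ C * σ ^ n)
include hle hK1 hK hσ0 hσ1 hσ

lemma lintegral_sum_markedMoment_le {M j N k : ℕ} (hk : k ∈ windowIndices M j N) :
    ∫⁻ ω, ∑ l ∈ Finset.Ico k (k + k / M), markedMoment r G j k l N ω
        ∂(Measure.infinitePi fun _ ↦ ν) ≤
      (K ^ j * c ^ 2 * C * (σ ^ (j + 1))⁻¹ * ((k / M : ℕ) * (σ ^ M * K ^ 2) ^ (k / M)) : ℝ≥0) := by
  obtain ⟨-, hjk, hkN⟩ := Finset.mem_filter.1 hk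
  have hmoment (l : ℕ) (hl : l ∈ Finset.Ico k (k + k / M)) :
      ∫⁻ ω, markedMoment r G j k l N ω ∂(Measure.infinitePi fun _ ↦ ν) ≤
        (K ^ j * c ^ 2 * C * (σ ^ (j + 1))⁻¹ * (σ ^ M * K ^ 2) ^ (k / M) : ℝ≥0) := by
    obtain ⟨hkl, hlk⟩ := Finset.mem_Ico.1 hl
    have hlk' : l - k ≤ k / M := by lia
    refine (lintegral_markedMoment_le hr hG hle hK hσ hjk hkl (hlk.trans_le hkN)).trans
      (ENNReal.coe_le_coe.2 ?_)
    calc K ^ j * (c * (C * σ ^ (k - (j + 1)) * ((K ^ 2) ^ (l - k) * c)))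
        = K ^ j * c ^ 2 * C * (σ ^ (k - (j + 1)) * (K ^ 2) ^ (l - k)) := by ring
      _ ≤ K ^ j * c ^ 2 * C * ((σ ^ (j + 1))⁻¹ * (σ ^ M * K ^ 2) ^ (k / M)) := by
          gcongr _ * ?_
          exact pow_sub_mul_pow_le hσ0 hσ1 (one_le_pow₀ hK1) hjk hlk'
      _ = _ := by ring
  rw [lintegral_finsetSum _ fun l _ ↦ measurable_markedMoment hr hG]
  refine (Finset.sum_le_card_nsmul _ _ _ hmoment).trans_eq ?_
  rw [Nat.card_Ico, Nat.add_sub_cancel_left, nsmul_eq_mul]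
  norm_cast
  ring

lemma exists_lintegral_windowSum_le {M : ℕ} [NeZero M] (hM : σ ^ M * K ^ 2 < 1) (j : ℕ) :
    ∃ B : ℝ≥0, ∀ N, ∫⁻ ω, windowSum r G M j N ω ∂(Measure.infinitePi fun _ ↦ ν) ≤ B := by
  set D : ℝ≥0 := K ^ j * c ^ 2 * C * (σ ^ (j + 1))⁻¹
  set q := σ ^ M * K ^ 2
  have hfin : ∑' k : ℕ, ((D * ((k / M : ℕ) * q ^ (k / M)) : ℝ≥0) : ℝ≥0∞) ≠ ⊤ := by
    rw [tsum_comp_nat_div fun g ↦ ((D * (g * q ^ g) : ℝ≥0) : ℝ≥0∞)]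
    simp only [ENNReal.coe_mul D, ENNReal.tsum_mul_left]
    exact ENNReal.mul_ne_top (by simp) (ENNReal.mul_ne_top (by simp)
      (tsum_natCast_mul_pow_ne_top hM))
  lift ∑' k : ℕ, ((D * ((k / M : ℕ) * q ^ (k / M)) : ℝ≥0) : ℝ≥0∞) to ℝ≥0 using hfin with B hB
  refine ⟨B, fun N ↦ ?_⟩
  calc ∫⁻ ω, windowSum r G M j N ω ∂(Measure.infinitePi fun _ ↦ ν)
      = ∑ k ∈ windowIndices M j N, ∫⁻ ω, ∑ l ∈ Finset.Ico k (k + k / M), markedMoment r G j k l N ω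
          ∂(Measure.infinitePi fun _ ↦ ν) :=
        lintegral_finsetSum _ fun k _ ↦ Finset.measurable_fun_sum _ fun l _ ↦
          measurable_markedMoment hr hG
    _ ≤ ∑ k ∈ windowIndices M j N, ((D * ((k / M : ℕ) * q ^ (k / M)) : ℝ≥0) : ℝ≥0∞) :=
        Finset.sum_le_sum fun k hk ↦
          lintegral_sum_markedMoment_le hr hG hle hK1 hK hσ0 hσ1 hσ hk
    _ ≤ B := hB ▸ ENNReal.sum_le_tsum _

end WindowSums

section AlmostSure

lemma ae_exists_frequently_le_of_lintegral_le {Ω : Type*} [MeasurableSpace Ω] {P : Measure Ω}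
    {f : ℕ → Ω → ℝ≥0∞} (hf : ∀ n, Measurable (f n)) {B : ℝ≥0} (hB : ∀ n, ∫⁻ ω, f n ω ∂P ≤ B) :
    ∀ᵐ ω ∂P, ∃ b : ℝ≥0, ∃ᶠ n in atTop, f n ω ≤ b := by
  have hliminf : ∫⁻ ω, liminf (fun n ↦ f n ω) atTop ∂P ≤ B :=
    (lintegral_liminf_le hf).trans
      ((liminf_le_liminf (.of_forall hB)).trans_eq (liminf_const (B : ℝ≥0∞)))
  filter_upwards [ae_lt_top (.liminf hf) (ne_top_of_le_ne_top ENNReal.coe_ne_top hliminf)] with ω hω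
  obtain ⟨b, hb, -⟩ := ENNReal.lt_iff_exists_nnreal_btwn.1 hω
  exact ⟨b, (frequently_lt_of_liminf_lt (by isBoundedDefault) hb).mono fun n hn ↦ hn.le⟩

lemma ae_eventually_exists_mem_Ico_mem {X : Type*} [MeasurableSpace X] (ν : Measure X)
    [IsProbabilityMeasure ν] {G : Set X} (hG : MeasurableSet G) (hνG : ν G ≠ 0) (M : ℕ) [NeZero M] :
    ∀ᵐ ω ∂(Measure.infinitePi fun _ : ℕ ↦ ν),
      ∀ᶠ k in atTop, ∃ l ∈ Finset.Ico k (k + k / M), ω l ∈ G := by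
  have hmiss (k : ℕ) : Measure.infinitePi (fun _ : ℕ ↦ ν)
      ((Finset.Ico k (k + k / M) : Set ℕ).pi fun _ ↦ Gᶜ) = ν Gᶜ ^ (k / M) := by
    rw [Measure.infinitePi_pi _ fun _ _ ↦ hG.compl]
    simp
  have hsum : ∑' k, Measure.infinitePi (fun _ : ℕ ↦ ν)
      ((Finset.Ico k (k + k / M) : Set ℕ).pi fun _ ↦ Gᶜ) ≠ ⊤ := by
    simp_rw [hmiss]
    rw [tsum_comp_nat_div fun g ↦ ν Gᶜ ^ g, ENNReal.tsum_geometric]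
    have hlt : ν Gᶜ < 1 := by
      rw [prob_compl_eq_one_sub hG]
      exact ENNReal.sub_lt_self (by simp) (by simp) hνG
    exact ENNReal.mul_ne_top (by simp) (ENNReal.inv_ne_top.2 (tsub_pos_of_lt hlt).ne')
  filter_upwards [ae_eventually_notMem hsum] with ω hω
  filter_upwards [hω] with k hk
  simpa [and_assoc] using hk

variable {r : ℝ} (hr : |r| < 1) {G : Set Torus}
include hr

lemma sum_lintegral_cmvFun_le_windowSum {M j k₁ : ℕ} {ω : ℕ → Torus} (hj : ω j ∈ G)
    (hvisit : ∀ k ≥ k₁, ∃ l ∈ Finset.Ico k (k + k / M), ω l ∈ G) {α : ℕ → ℂ}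
    (hα : α = phaseCoeff r fun m ↦ ∑ i ∈ Finset.range (m + 1), ω i) (N : ℕ) :
    ∑ k ∈ windowIndices M j N with k₁ ≤ k, ∫⁻ ζ, ‖cmvFun α k ζ‖ₑ ∂bernsteinSzego α N ≤
      windowSum r G M j N ω := by
  refine le_trans (Finset.sum_le_sum fun k hk ↦ ?_) (Finset.sum_le_sum_of_subset
    (Finset.filter_subset _ _))
  obtain ⟨hkN, hk₁⟩ := Finset.mem_filter.1 hk
  obtain ⟨l, hl, hlG⟩ := hvisit k hk₁
  have hk : k ≤ N := (Finset.mem_range.1 (Finset.mem_filter.1 hkN).1).le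
  rw [← markedMoment_eq hr hk hj hlG hα]
  exact Finset.single_le_sum (f := fun l ↦ markedMoment r G j k l N ω) (fun _ _ ↦ zero_le) hl

/-- It suffices to bound the window sums started at a single visit `j` of `G`, but `j` depends
on `ω`. -/
lemma topologicalClosure_span_eigenvectors_eq_top_of_windowSum {M : ℕ} {ω : ℕ → Torus}
    (hvisit : ∀ᶠ k in atTop, ∃ l ∈ Finset.Ico k (k + k / M), ω l ∈ G)
    (hbdd : ∀ j, ∃ B : ℝ≥0, ∃ᶠ N in atTop, windowSum r G M j N ω ≤ B) {C : Hn →L[ℂ] Hn}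
    (hC : ∀ k j, inner (𝕜 := ℂ) (en k) (C (en j)) =
      CentA r √(1 - r ^ 2) (fun m ↦ ∑ i ∈ Finset.range (m + 1), ω i) k j) :
    (Submodule.span ℂ {ψ : Hn | ψ ≠ 0 ∧ ∃ μ : ℂ, C ψ = μ • ψ}).topologicalClosure = ⊤ := by
  obtain ⟨k₁, hk₁⟩ := eventually_atTop.1 hvisit
  obtain ⟨j, -, hj⟩ := hk₁ k₁ le_rfl
  obtain ⟨B, hB⟩ := hbdd j
  have hS : ∀ᶠ k in atTop, ∀ᶠ N in atTop, k ∈ {k ∈ windowIndices M j N | k₁ ≤ k} := by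
    filter_upwards [eventually_mem_windowIndices M j, eventually_ge_atTop k₁] with k hk hkk₁
    filter_upwards [hk] with N hN
    exact Finset.mem_filter.2 ⟨hN, hkk₁⟩
  obtain ⟨μ, _, horth, hsum⟩ := exists_orthonormal_summable_integral_norm_cmvFun
    (norm_phaseCoeff_lt_one hr _) hS
    (hB.mono fun N hN ↦ (sum_lintegral_cmvFun_le_windowSum hr hj hk₁ rfl N).trans hN)
  exact topologicalClosure_span_eigenvectors_eq_top hr hC horth hsum

lemma exists_ae_forall_frequently_windowSum_le (hr0 : r ≠ 0) {ν : Measure Torus}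
    [IsProbabilityMeasure ν] (hG : MeasurableSet G) (hνG : ν G ≠ 0) {c : ℝ≥0}
    (hle : ν.restrict G ≤ c • haarAddCircle) :
    ∃ M : ℕ, M ≠ 0 ∧ ∀ᵐ ω ∂(Measure.infinitePi fun _ ↦ ν),
      ∀ j, ∃ B : ℝ≥0, ∃ᶠ N in atTop, windowSum r G M j N ω ≤ B := by
  obtain ⟨q, hq0, hq1, hq⟩ := exists_forall_norm_integral_ec_zpow_le hνG hle
  obtain ⟨σ, C, hσ0, hσ1, hσ⟩ := exists_integral_koopman_transferIter_le hr ν hr0 hq0 hq1 hq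
  obtain ⟨K, hK1, hK⟩ : ∃ K : ℝ≥0, 1 ≤ K ∧ ∀ y, phaseWeight r y ≤ K := by
    obtain ⟨b, hb⟩ := (isCompact_range (continuous_phaseWeight hr)).bddAbove
    refine ⟨max 1 b.toNNReal, le_max_left _ _, fun y ↦ ?_⟩
    exact (hb ⟨y, rfl⟩).trans
      ((Real.le_coe_toNNReal b).trans (NNReal.coe_le_coe.2 (le_max_right _ _)))
  obtain ⟨M, hM0, hM⟩ : ∃ M : ℕ, M ≠ 0 ∧ σ ^ M * K ^ 2 < 1 := by
    have hlim : Tendsto (fun M ↦ σ ^ M * K ^ 2) atTop (𝓝 (0 * K ^ 2)) :=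
      (NNReal.tendsto_pow_atTop_nhds_zero_of_lt_one hσ1).mul_const _
    exact ((eventually_ne_atTop 0).and (hlim.eventually_lt_const (by simp))).exists
  have : NeZero M := ⟨hM0⟩
  refine ⟨M, hM0, ae_all_iff.2 fun j ↦ ?_⟩
  obtain ⟨B, hB⟩ := exists_lintegral_windowSum_le hr hG hle hK1 hK hσ0 hσ1.le hσ hM j
  exact ae_exists_frequently_le_of_lintegral_le (fun N ↦ measurable_windowSum hr hG M j N) hB

end AlmostSure

theorem opuc_localization_general {r : ℝ} (hr0 : r ≠ 0) (hr1 : |r| < 1) {t : ℝ}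
    (ht : t = √(1 - r ^ 2)) {ν : Measure Torus} [IsProbabilityMeasure ν]
    (hac : (volume : Measure Torus).withDensity (ν.rnDeriv volume) ≠ 0)
    {ℙ : Measure (ℕ → Torus)}
    (hiid : ∀ (s : Finset ℕ) (A : ℕ → Set Torus), (∀ k, MeasurableSet (A k)) →
      ℙ {ω | ∀ k ∈ s, ω k ∈ A k} = ∏ k ∈ s, ν (A k))
    {C : (ℕ → Torus) → (Hn →L[ℂ] Hn)}
    (hC : ∀ (ω : ℕ → Torus) (k j : ℕ), inner (𝕜 := ℂ) (en k) (C ω (en j)) =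
      CentA r t (fun m ↦ ∑ i ∈ Finset.range (m + 1), ω i) k j) :
    ∀ᵐ ω ∂ℙ,
      (Submodule.span ℂ {ψ : Hn | ψ ≠ 0 ∧ ∃ μ : ℂ, C ω ψ = μ • ψ}).topologicalClosure = ⊤ := by
  obtain ⟨G, c, hG, hνG, hle⟩ := exists_restrict_le_smul_of_withDensity_rnDeriv_ne_zero hac
  have hle_haar : ν.restrict G ≤ (c * (2 * Real.pi).toNNReal) • haarAddCircle := by
    rw [← smul_smul]
    exact hle
  obtain ⟨M, hM, hbdd⟩ := exists_ae_forall_frequently_windowSum_le hr1 hr0 hG hνG hle_haar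
  have : NeZero M := ⟨hM⟩
  rw [Measure.eq_infinitePi (fun _ ↦ ν) hiid]
  filter_upwards [hbdd, ae_eventually_exists_mem_Ico_mem ν hG hνG M] with ω hω_bdd hω_visit
  exact topologicalClosure_span_eigenvectors_eq_top_of_windowSum hr1 hω_visit hω_bdd
    (ht ▸ hC ω)

end

/-- Localization for random OPUC with correlated Verblunski coefficients:
if `θ_k` are i.i.d. with law `ν` (having nontrivial a.c. component and support with nonempty
interior) and `η_k = θ_0 + ⋯ + θ_k`, then almost surely the CMV matrix with Verblunski
coefficients `α_k = r e^{iη_k}` has pure point spectrum. -/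
theorem opuc_localization
    (r : ℝ) (hr0 : 0 < r) (hr1 : r < 1) (t : ℝ) (ht : t = Real.sqrt (1 - r^2))
    (ν : Measure Torus) [IsProbabilityMeasure ν]
    (hac : (volume : Measure Torus).withDensity (ν.rnDeriv volume) ≠ 0)
    (hsupp : (interior (measSupport ν)).Nonempty)
    (ℙ : Measure (ℕ → Torus)) [IsProbabilityMeasure ℙ]
    (hiid : ∀ (s : Finset ℕ) (A : ℕ → Set Torus), (∀ k, MeasurableSet (A k)) →
      ℙ {ω | ∀ k ∈ s, ω k ∈ A k} = ∏ k ∈ s, ν (A k))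
    (C : (ℕ → Torus) → (Hn →L[ℂ] Hn))
    (hC : ∀ (ω : ℕ → Torus) (k j : ℕ),
      inner (𝕜 := ℂ) (en k) (C ω (en j)) =
        CentA r t (fun m => ∑ i ∈ Finset.range (m+1), ω i) k j) :
    ∀ᵐ ω ∂ℙ,
      (Submodule.span ℂ {ψ : Hn | ψ ≠ 0 ∧ ∃ μ : ℂ, C ω ψ = μ • ψ}).topologicalClosure = ⊤ := by
  exact opuc_localization_general hr0.ne' (by rwa [abs_of_pos hr0]) ht hac hiid hC

end
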